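/- arXiv:2108.00287 — 2 statements merged into one kernel-verified Lean document; each statement's English description precedes it below -/
import Mathlib

section
/- Let k be a positive integer and suppose θ ∈ ℂ is algebraic of degree d over ℚ with 2 ≤ d < k. Then for every ε > 0 there exists a constant C > 0 (depending on k, ε and θ) such that for all real X ≥ 2, the number of 2k-tuples of integers (x₁,…,x_k,y₁,…,y_k) with 1 ≤ x_i, y_i ≤ X for all i, satisfying (x₁+θ)⋯(x_k+θ) = (y₁+θ)⋯(y_k+θ), and such that (y₁,…,y_k) is NOT a permutation of (x₁,…,x_k), is at most C·X^{k−d+1+ε}. -/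
/-!
Let `f` be the primitive integer polynomial of degree `d` vanishing at `-θ`. A pair `(x, y)` is a
solution exactly when `f` divides `P_x - P_y`, where `P_x = ∏ (X - x_i)`, and it is diagonal exactly
when `P_x = P_y`.

* Comparing resultants with `f` gives `∏ f(x_i) = ∏ f(y_i)`, so by the divisor bound a given `x`
  occurs in only `≪ N^ε` solutions with entries at most `N`.
* If an entry `Y` of `y` exceeds all entries of `x`, then evaluating at `Y` shows that `f(Y)`
  divides the nonzero integer `∏ (Y - x_i)`. Since `|f(Y)| ≍ Y^d`, the divisor bound leaves
  `≪ Y^(k-d+ε)` choices of `x`, and summing over `Y ≤ N` gives `≪ N^(k-d+1+ε)`.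
* If neither tuple dominates the other in this way, then they share an entry, which can be
  cancelled at the cost of a factor `N`. This is an induction on `k`, starting at `k = d`, where
  every solution is diagonal because `P_x - P_y` has degree less than `k`.
-/

namespace Paucity

open Polynomial Finset Lagrange

lemma natCast_add_one_le_pow {x : ℝ} (hx : 2 ≤ x) (e : ℕ) : (e : ℝ) + 1 ≤ x ^ e := by
  have bernoulli := one_add_mul_sub_le_pow (show -1 ≤ x by linarith) e
  nlinarith [e.cast_nonneg (α := ℝ)]

lemma natCast_add_one_le_mul_pow {x : ℝ} (hx : 1 < x) (e : ℕ) :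
    (e : ℝ) + 1 ≤ (1 + (x - 1)⁻¹) * x ^ e := by
  have hx' : 0 < x - 1 := sub_pos.mpr hx
  calc (e : ℝ) + 1 ≤ (1 + (x - 1)⁻¹) * (1 + e * (x - 1)) := by
        field_simp
        nlinarith [mul_nonneg (e.cast_nonneg (α := ℝ)) (mul_pos hx' hx').le]
    _ ≤ (1 + (x - 1)⁻¹) * x ^ e := by
        gcongr
        exact one_add_mul_sub_le_pow (by linarith) e

lemma natCast_add_one_le_ite_mul_rpow {δ : ℝ} (hδ : 0 < δ) {p : ℕ} (hp : 2 ≤ p) (e : ℕ) :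
    (e : ℝ) + 1 ≤
      (if p < ⌈(2 : ℝ) ^ δ⁻¹⌉₊ then 1 + ((2 : ℝ) ^ δ - 1)⁻¹ else 1) * ((p : ℝ) ^ e) ^ δ := by
  have two_le : (2 : ℝ) ≤ p := mod_cast hp
  have one_lt : (1 : ℝ) < 2 ^ δ := Real.one_lt_rpow one_lt_two hδ
  rw [← Real.rpow_pow_comm (by positivity)]
  split_ifs with hpB
  · calc (e : ℝ) + 1 ≤ (1 + ((2 : ℝ) ^ δ - 1)⁻¹) * (2 ^ δ) ^ e :=
        natCast_add_one_le_mul_pow one_lt e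
      _ ≤ (1 + ((2 : ℝ) ^ δ - 1)⁻¹) * ((p : ℝ) ^ δ) ^ e := by
        have := sub_pos.mpr one_lt
        gcongr
  · rw [one_mul]
    refine natCast_add_one_le_pow ?_ e
    calc (2 : ℝ) = (2 ^ δ⁻¹) ^ δ := (Real.rpow_inv_rpow zero_le_two hδ.ne').symm
      _ ≤ (p : ℝ) ^ δ := by
        gcongr
        exact Nat.ceil_le.mp (not_lt.mp hpB)

/- Only the primes `p < 2 ^ δ⁻¹`, a bounded number, have `p ^ δ < 2` and so contribute a factor
above 1 to `d(n) / n ^ δ`. -/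
lemma exists_card_divisors_le_mul_rpow {δ : ℝ} (hδ : 0 < δ) :
    ∃ C : ℝ, 0 < C ∧ ∀ n : ℕ, n ≠ 0 → (#n.divisors : ℝ) ≤ C * (n : ℝ) ^ δ := by
  set B := ⌈(2 : ℝ) ^ δ⁻¹⌉₊
  set K := 1 + ((2 : ℝ) ^ δ - 1)⁻¹
  have one_le_K : 1 ≤ K :=
    le_add_of_nonneg_right (inv_nonneg.mpr (sub_nonneg.mpr (Real.one_le_rpow one_le_two hδ.le)))
  refine ⟨K ^ B, by positivity, fun n hn => ?_⟩
  have prod_K_le : ∏ p ∈ n.primeFactors, (if p < B then K else 1) ≤ K ^ B := by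
    rw [← prod_filter, prod_const]
    refine pow_le_pow_right₀ one_le_K ((card_le_card fun p hp => ?_).trans (card_range B).le)
    exact mem_range.mpr (mem_filter.mp hp).2
  have prod_rpow : ∏ p ∈ n.primeFactors, ((p : ℝ) ^ n.factorization p) ^ δ = (n : ℝ) ^ δ := by
    rw [Real.finsetProd_rpow _ _ fun _ _ => by positivity]
    exact_mod_cast congrArg (fun m : ℕ => (m : ℝ) ^ δ) (Nat.prod_factorization_pow_eq_self hn)
  calc (#n.divisors : ℝ) = ∏ p ∈ n.primeFactors, ((n.factorization p : ℝ) + 1) := by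
        simp [Nat.card_divisors hn]
    _ ≤ ∏ p ∈ n.primeFactors, (if p < B then K else 1) * ((p : ℝ) ^ n.factorization p) ^ δ :=
        prod_le_prod (fun _ _ => by positivity) fun p hp =>
          natCast_add_one_le_ite_mul_rpow hδ (Nat.prime_of_mem_primeFactors hp).two_le _
    _ = (∏ p ∈ n.primeFactors, (if p < B then K else 1)) * (n : ℝ) ^ δ := by
        rw [prod_mul_distrib, prod_rpow]
    _ ≤ K ^ B * (n : ℝ) ^ δ := by gcongr

lemma exists_card_divisors_pow_le_of_le_mul_pow {ε A : ℝ} (hε : 0 < ε) (hA : 0 < A) (a k : ℕ) :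
    ∃ C : ℝ, 0 < C ∧ ∀ N : ℝ, 1 ≤ N → ∀ m : ℕ, m ≠ 0 → (m : ℝ) ≤ A * N ^ a →
      (#m.divisors : ℝ) ^ k ≤ C * N ^ ε := by
  set δ := ε / (a * k + 1)
  have hδ : 0 < δ := by positivity
  have hδε : a * δ * k ≤ ε := by
    have : δ * (a * k + 1) = ε := div_mul_cancel₀ ε (by positivity)
    linarith
  obtain ⟨C, hC, card_le⟩ := exists_card_divisors_le_mul_rpow hδ
  refine ⟨(C * A ^ δ) ^ k, by positivity, fun N hN m hm hmA => ?_⟩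
  have hN0 : 0 < N := one_pos.trans_le hN
  calc (#m.divisors : ℝ) ^ k ≤ (C * (A * N ^ a) ^ δ) ^ k := by
        gcongr
        exact (card_le m hm).trans (by gcongr)
    _ = (C * A ^ δ) ^ k * N ^ (a * δ * k) := by
        rw [Real.mul_rpow hA.le (by positivity), ← mul_assoc, mul_pow (C * A ^ δ),
          Real.rpow_mul hN0.le, Real.rpow_mul hN0.le, Real.rpow_natCast, Real.rpow_natCast]
    _ ≤ (C * A ^ δ) ^ k * N ^ ε := by gcongr

lemma exists_prod_eq_and_forall_dvd_of_dvd_prod {ι M : Type*} [CommMonoid M] [DecompositionMonoid M]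
    [Subsingleton Mˣ] {s : Finset ι} {z : ι → M} {m : M} (h : m ∣ ∏ i ∈ s, z i) :
    ∃ g : ι → M, ∏ i ∈ s, g i = m ∧ ∀ i ∈ s, g i ∣ z i := by
  classical
  induction s using Finset.induction_on generalizing m with
  | empty => exact ⟨1, by simpa using (isUnit_iff_eq_one.mp (isUnit_of_dvd_one h)).symm, by simp⟩
  | insert j s hj ih =>
    rw [prod_insert hj] at h
    obtain ⟨a, b, ha, hb, rfl⟩ := exists_dvd_and_dvd_of_dvd_mul h
    obtain ⟨g, rfl, hg⟩ := ih hb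
    refine ⟨Function.update g j a, ?_, fun i hi => ?_⟩
    · rw [prod_insert hj, Function.update_self, prod_update_of_notMem hj]
    · obtain rfl | hne := eq_or_ne i j
      · rwa [Function.update_self]
      · rw [Function.update_of_ne hne]
        exact hg i ((mem_insert.mp hi).resolve_left hne)

lemma card_filter_dvd_Icc_mul_le (g Y : ℕ) : #{e ∈ Icc 1 Y | g ∣ e} * g ≤ Y := by
  rw [show Icc 1 Y = Ioc 0 Y from rfl, Nat.Ioc_filter_dvd_card_eq_div]
  exact Nat.div_mul_le_self Y g

lemma card_filter_dvd_prod_mul_le {ι : Type*} [Fintype ι] [DecidableEq ι] (Y : ℕ) {M : ℕ}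
    (hM : M ≠ 0) :
    #{z ∈ Fintype.piFinset fun _ : ι => Icc 1 Y | M ∣ ∏ i, z i} * M ≤
      #M.divisors ^ Fintype.card ι * Y ^ Fintype.card ι := by
  set factorizations := {g ∈ Fintype.piFinset fun _ : ι => M.divisors | ∏ i, g i = M}
  set multiples := fun g : ι → ℕ => Fintype.piFinset fun i => {e ∈ Icc 1 Y | g i ∣ e}
  have subset_multiples : {z ∈ Fintype.piFinset fun _ : ι => Icc 1 Y | M ∣ ∏ i, z i} ⊆
      factorizations.biUnion multiples := by
    intro z hz
    simp only [mem_filter, Fintype.mem_piFinset] at hz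
    obtain ⟨g, rfl, hg⟩ := exists_prod_eq_and_forall_dvd_of_dvd_prod hz.2
    simp only [factorizations, multiples, mem_biUnion, mem_filter, Fintype.mem_piFinset]
    exact ⟨g, ⟨fun i => Nat.mem_divisors.mpr ⟨dvd_prod_of_mem g (mem_univ i), hM⟩, rfl⟩,
      fun i => ⟨hz.1 i, hg i (mem_univ i)⟩⟩
  have card_multiples : ∀ g ∈ factorizations, #(multiples g) * M ≤ Y ^ Fintype.card ι := by
    intro g hg
    rw [Fintype.card_piFinset]
    nth_rw 1 [← (mem_filter.mp hg).2]
    rw [← prod_mul_distrib]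
    exact prod_le_pow_card _ _ _ fun i _ => card_filter_dvd_Icc_mul_le (g i) Y
  calc _ ≤ (∑ g ∈ factorizations, #(multiples g)) * M := by
        gcongr
        exact (card_le_card subset_multiples).trans card_biUnion_le
    _ ≤ #factorizations * Y ^ Fintype.card ι := by
        rw [sum_mul]
        exact sum_le_card_nsmul _ _ _ card_multiples
    _ ≤ #M.divisors ^ Fintype.card ι * Y ^ Fintype.card ι := by
        gcongr
        exact (card_filter_le _ _).trans (by simp)

section Nodal

variable {R ι : Type*} [CommRing R] [Fintype ι]

lemma nodal_eq_X_sub_C_mul_nodal_removeNth {k : ℕ} (x : Fin (k + 1) → R) (i : Fin (k + 1)) :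
    nodal univ x = (X - C (x i)) * nodal univ (i.removeNth x) := by
  simp only [nodal_eq, Fin.prod_univ_succAbove _ i, Fin.removeNth]

lemma nodal_sub_nodal_eq_X_sub_C_mul {k : ℕ} {x y : Fin (k + 1) → R} {i j : Fin (k + 1)}
    (h : x i = y j) :
    nodal univ x - nodal univ y =
      (X - C (x i)) * (nodal univ (i.removeNth x) - nodal univ (j.removeNth y)) := by
  rw [nodal_eq_X_sub_C_mul_nodal_removeNth x i, nodal_eq_X_sub_C_mul_nodal_removeNth y j, ← h,
    mul_sub]

lemma eval_dvd_prod_of_dvd_nodal_sub {f : R[X]} {x y : ι → R}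
    (h : f ∣ nodal univ x - nodal univ y) (j : ι) : f.eval (y j) ∣ ∏ i, (y j - x i) := by
  simpa [eval_nodal, eval_nodal_at_node (mem_univ j)] using eval_dvd h (x := y j)

variable [IsDomain R]

lemma dvd_of_dvd_X_sub_C_mul {f g : R[X]} {a : R} (ha : f.eval a ≠ 0) (h : f ∣ (X - C a) * g) :
    f ∣ g :=
  ((prime_X_sub_C a).left_dvd_or_dvd_right_of_dvd_mul h).resolve_left fun hdvd =>
    ha (dvd_iff_isRoot.mp hdvd)

lemma natDegree_lt_card_of_dvd_nodal_sub {f : R[X]} {x y : ι → R}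
    (h : f ∣ nodal univ x - nodal univ y) (hxy : nodal univ x ≠ nodal univ y) :
    f.natDegree < Fintype.card ι := by
  have nodal_sub_ne := sub_ne_zero.mpr hxy
  have degree_sub_lt : (nodal univ x - nodal univ y).degree < (nodal univ x).degree :=
    degree_sub_lt_left (by simp only [degree_nodal]) nodal_ne_zero
      (by rw [nodal_monic.leadingCoeff, nodal_monic.leadingCoeff])
  calc f.natDegree ≤ (nodal univ x - nodal univ y).natDegree := natDegree_le_of_dvd h nodal_sub_ne
    _ < (nodal univ x).natDegree := natDegree_lt_natDegree nodal_sub_ne degree_sub_lt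
    _ = Fintype.card ι := natDegree_nodal

lemma resultant_nodal (f : R[X]) (x : ι → R) :
    f.resultant (nodal univ x) f.natDegree (Fintype.card ι) =
      ∏ i, (-1) ^ f.natDegree * f.eval (x i) := by
  have leadingCoeff_ne : ∏ i, (X - C (x i)).leadingCoeff ≠ 0 := by simp
  have := resultant_prod_right univ f (fun i => X - C (x i)) f.natDegree le_rfl leadingCoeff_ne
  simpa only [← nodal_eq, natDegree_nodal, card_univ, natDegree_X_sub_C,
    resultant_X_sub_C_right _ _ _ le_rfl] using this

/- Both sides are, up to the same sign, resultants with `f`, and the resultant with `f` depends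
only on the residue class modulo `f`. -/
lemma prod_eval_eq_of_dvd_nodal_sub {f : R[X]} {x y : ι → R}
    (h : f ∣ nodal univ x - nodal univ y) : ∏ i, f.eval (x i) = ∏ i, f.eval (y i) := by
  suffices resultant_eq : f.resultant (nodal univ x) f.natDegree (Fintype.card ι) =
      f.resultant (nodal univ y) f.natDegree (Fintype.card ι) by
    rw [resultant_nodal, resultant_nodal, prod_mul_distrib, prod_mul_distrib] at resultant_eq
    exact mul_left_cancel₀ (by simp) resultant_eq
  obtain hxy | hxy := eq_or_ne (nodal univ x) (nodal univ y)
  · rw [hxy]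
  · obtain ⟨q, hq⟩ := h
    have natDegree_mul_lt : (f * q).natDegree < Fintype.card ι :=
      natDegree_lt_card_of_dvd_nodal_sub (dvd_of_eq hq.symm) hxy
    have f_mul_ne : f * q ≠ 0 := hq ▸ sub_ne_zero.mpr hxy
    rw [natDegree_mul (left_ne_zero_of_mul f_mul_ne) (right_ne_zero_of_mul f_mul_ne),
      add_comm] at natDegree_mul_lt
    rw [sub_eq_iff_eq_add'.mp hq, resultant_add_mul_right _ _ _ _ _ natDegree_mul_lt.le le_rfl]

lemma exists_perm_of_nodal_eq {x y : ι → R} (h : nodal univ x = nodal univ y) :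
    ∃ σ : Equiv.Perm ι, ∀ i, y i = x (σ i) := by
  classical
  have roots_nodal (z : ι → R) : (nodal univ z).roots = univ.val.map z := by
    simpa [nodal_eq, Function.comp_def] using roots_multiset_prod_X_sub_C (univ.val.map z)
  have card_fiber (z : ι → R) (c : R) :
      Fintype.card {i // z i = c} = (nodal univ z).roots.count c := by
    rw [roots_nodal, Multiset.count_map, Fintype.card_subtype]
    simp only [eq_comm, card_def, filter_val]
  exact ⟨Equiv.ofFiberEquiv (f := y) (g := x) fun c =>
    Fintype.equivOfCardEq (by rw [card_fiber, card_fiber, h]),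
    fun i => (Equiv.ofFiberEquiv_map _ i).symm⟩

end Nodal

section Values

lemma exists_natAbs_eval_le_mul {P Q : ℤ[X]} (hdeg : P.degree ≤ Q.degree)
    (hQ : ∀ n : ℤ, 1 ≤ n → Q.eval n ≠ 0) :
    ∃ A : ℝ, 0 < A ∧ ∀ n : ℤ, 1 ≤ n → ((P.eval n).natAbs : ℝ) ≤ A * (Q.eval n).natAbs := by
  have norm_eval (F : ℤ[X]) (n : ℕ) :
      ‖(F.map (Int.castRingHom ℝ)).eval (n : ℝ)‖ = (F.eval (n : ℤ)).natAbs := by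
    simp [Nat.cast_natAbs, eval_natCast_map]
  have degree_map_le : (P.map (Int.castRingHom ℝ)).degree ≤ (Q.map (Int.castRingHom ℝ)).degree := by
    simpa only [degree_map_eq_of_injective (RingHom.injective_int (Int.castRingHom ℝ))] using hdeg
  obtain ⟨A, hA, norm_le⟩ := Asymptotics.bound_of_isBigO_nat_atTop
    ((isBigO_atTop_of_degree_le _ _ degree_map_le).comp_tendsto tendsto_natCast_atTop_atTop)
  refine ⟨A, hA, fun n hn => ?_⟩
  lift n to ℕ using zero_le_one.trans hn
  have eval_map_ne : (Q.map (Int.castRingHom ℝ)).eval (n : ℝ) ≠ 0 := by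
    rw [← norm_ne_zero_iff, norm_eval]
    exact_mod_cast Int.natAbs_ne_zero.mpr (hQ n hn)
  simpa only [Function.comp_apply, norm_eval] using norm_le eval_map_ne

lemma exists_natAbs_eval_le_mul_pow (f : ℤ[X]) :
    ∃ A : ℝ, 0 < A ∧ ∀ n : ℤ, 1 ≤ n → ((f.eval n).natAbs : ℝ) ≤ A * (n : ℝ) ^ f.natDegree := by
  obtain ⟨A, hA, natAbs_le⟩ := exists_natAbs_eval_le_mul (P := f) (Q := X ^ f.natDegree)
    (degree_le_natDegree.trans (degree_X_pow _).ge) fun n hn => by simp; lia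
  refine ⟨A, hA, fun n hn => ?_⟩
  simpa [Int.natAbs_pow, Nat.cast_natAbs, abs_of_pos (one_pos.trans_le hn)] using natAbs_le n hn

lemma exists_pow_le_mul_natAbs_eval {f : ℤ[X]} (hf : ∀ n : ℤ, 1 ≤ n → f.eval n ≠ 0) :
    ∃ A : ℝ, 0 < A ∧ ∀ n : ℤ, 1 ≤ n → (n : ℝ) ^ f.natDegree ≤ A * (f.eval n).natAbs := by
  have f_ne_zero : f ≠ 0 := by rintro rfl; exact hf 1 le_rfl eval_zero
  obtain ⟨A, hA, le_natAbs⟩ := exists_natAbs_eval_le_mul (P := X ^ f.natDegree) (Q := f)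
    ((degree_X_pow _).le.trans (degree_eq_natDegree f_ne_zero).ge) hf
  refine ⟨A, hA, fun n hn => ?_⟩
  simpa [Int.natAbs_pow, Nat.cast_natAbs, abs_of_pos (one_pos.trans_le hn)] using le_natAbs n hn

lemma card_filter_natAbs_eval_eq_le {f : ℤ[X]} (hf : 0 < f.natDegree) (s : Finset ℤ) (w : ℕ) :
    #{v ∈ s | (f.eval v).natAbs = w} ≤ 2 * f.natDegree := by
  have natDegree_eq : (f ^ 2 - C ((w : ℤ) ^ 2)).natDegree = 2 * f.natDegree := by
    rw [natDegree_sub_C, natDegree_pow]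
  rw [← natDegree_eq]
  refine card_le_degree_of_subset_roots fun v hv => ?_
  rw [mem_roots (ne_zero_of_natDegree_gt (n := 0) (by lia)), IsRoot.def, eval_sub, eval_pow,
    eval_C, sub_eq_zero, ← Int.natAbs_eq_iff_sq_eq, Int.natAbs_natCast]
  exact (mem_filter.mp hv).2

lemma card_filter_natAbs_eval_dvd_le {f : ℤ[X]} (hf : 0 < f.natDegree) (s : Finset ℤ) {T : ℕ}
    (hT : T ≠ 0) : #{v ∈ s | (f.eval v).natAbs ∣ T} ≤ 2 * f.natDegree * #T.divisors :=
  card_le_mul_card_image_of_maps_to (f := fun v => (f.eval v).natAbs)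
    (fun _ hv => Nat.mem_divisors.mpr ⟨(mem_filter.mp hv).2, hT⟩) _
    fun w _ => card_filter_natAbs_eval_eq_le hf _ w

lemma card_filter_dvd_nodal_sub_le {ι : Type*} [Fintype ι] [DecidableEq ι] {f : ℤ[X]}
    (hf : 0 < f.natDegree) (s : Finset ℤ) {x : ι → ℤ} (hx : ∀ i, f.eval (x i) ≠ 0)
    [DecidablePred fun y : ι → ℤ => f ∣ nodal univ x - nodal univ y] :
    #{y ∈ Fintype.piFinset fun _ : ι => s | f ∣ nodal univ x - nodal univ y} ≤
      (2 * f.natDegree * #(∏ i, (f.eval (x i)).natAbs).divisors) ^ Fintype.card ι := by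
  set T := ∏ i, (f.eval (x i)).natAbs
  have T_ne : T ≠ 0 := prod_ne_zero_iff.mpr fun i _ => Int.natAbs_ne_zero.mpr (hx i)
  calc _ ≤ #(Fintype.piFinset fun _ : ι => {v ∈ s | (f.eval v).natAbs ∣ T}) := by
        refine card_le_card fun y hy => Fintype.mem_piFinset.mpr fun j => ?_
        obtain ⟨hys, hxy⟩ := mem_filter.mp hy
        have T_eq : T = ∏ i, (f.eval (y i)).natAbs := by
          simpa [map_prod] using congrArg Int.natAbsHom (prod_eval_eq_of_dvd_nodal_sub hxy)
        refine mem_filter.mpr ⟨Fintype.mem_piFinset.mp hys j, ?_⟩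
        exact T_eq ▸ dvd_prod_of_mem (fun i => (f.eval (y i)).natAbs) (mem_univ j)
    _ ≤ (2 * f.natDegree * #T.divisors) ^ Fintype.card ι := by
        rw [Fintype.card_piFinset, prod_const, card_univ]
        exact Nat.pow_le_pow_left (card_filter_natAbs_eval_dvd_le hf s T_ne) _

lemma card_filter_dvd_prod_sub_mul_natAbs_le {ι : Type*} [Fintype ι] [DecidableEq ι] (Y : ℕ)
    {M : ℤ} (hM : M ≠ 0) :
    #{x ∈ Fintype.piFinset fun _ : ι => Ico 1 (Y : ℤ) | M ∣ ∏ i, ((Y : ℤ) - x i)} * M.natAbs ≤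
      #M.natAbs.divisors ^ Fintype.card ι * Y ^ Fintype.card ι := by
  refine le_trans (Nat.mul_le_mul_right _ ?_)
    (card_filter_dvd_prod_mul_le Y (Int.natAbs_ne_zero.mpr hM))
  refine card_le_card_of_injOn (fun x i => ((Y : ℤ) - x i).natAbs) (fun x hx => ?_)
    fun x hx x' hx' hxx' => funext fun i => ?_
  · simp only [mem_coe, mem_filter, Fintype.mem_piFinset, mem_Ico, mem_Icc] at hx ⊢
    refine ⟨fun i => ?_, ?_⟩
    · have := hx.1 i
      lia
    · simpa [← Int.natAbsHom_apply, map_prod] using Int.natAbs_dvd_natAbs.mpr hx.2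
  · have := congrFun hxx' i
    simp only [mem_coe, mem_filter, Fintype.mem_piFinset, mem_Ico] at hx hx' this
    have := hx.1 i
    have := hx'.1 i
    lia

end Values

section Counting

/-- The `k`-tuples of integers in `[1, N]`, among which solutions of height `N` are counted. -/
noncomputable def box (k N : ℕ) : Finset (Fin k → ℤ) :=
  Fintype.piFinset fun _ => Icc 1 (N : ℤ)

lemma mem_box {k N : ℕ} {x : Fin k → ℤ} : x ∈ box k N ↔ ∀ i, 1 ≤ x i ∧ x i ≤ N := by
  simp [box]

open Classical in
/-- The pairs `(x, y)` of tuples in the box with `∏ (X - x i) ≡ ∏ (X - y i)` modulo `f`, excluding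
the diagonal ones: `y` is a permutation of `x` exactly when these two polynomials are equal. -/
noncomputable def nondiagonalPairs (f : ℤ[X]) (k N : ℕ) :
    Finset ((Fin k → ℤ) × (Fin k → ℤ)) :=
  {p ∈ box k N ×ˢ box k N |
    f ∣ nodal univ p.1 - nodal univ p.2 ∧ nodal univ p.1 ≠ nodal univ p.2}

open Classical in
/-- The pairs `(x, y)` of tuples in the box with `∏ (X - x i) ≡ ∏ (X - y i)` modulo `f` such that
some entry of `y` exceeds all entries of `x`. -/
noncomputable def dominatedPairs (f : ℤ[X]) (k N : ℕ) : Finset ((Fin k → ℤ) × (Fin k → ℤ)) :=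
  {p ∈ box k N ×ˢ box k N | f ∣ nodal univ p.1 - nodal univ p.2 ∧ ∃ j, ∀ i, p.1 i < p.2 j}

lemma mem_nondiagonalPairs {f : ℤ[X]} {k N : ℕ} {p : (Fin k → ℤ) × (Fin k → ℤ)} :
    p ∈ nondiagonalPairs f k N ↔ (p.1 ∈ box k N ∧ p.2 ∈ box k N) ∧
      f ∣ nodal univ p.1 - nodal univ p.2 ∧ nodal univ p.1 ≠ nodal univ p.2 := by
  simp only [nondiagonalPairs, mem_filter, mem_product]

lemma mem_dominatedPairs {f : ℤ[X]} {k N : ℕ} {p : (Fin k → ℤ) × (Fin k → ℤ)} :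
    p ∈ dominatedPairs f k N ↔ (p.1 ∈ box k N ∧ p.2 ∈ box k N) ∧
      f ∣ nodal univ p.1 - nodal univ p.2 ∧ ∃ j, ∀ i, p.1 i < p.2 j := by
  simp only [dominatedPairs, mem_filter, mem_product]

/-- The tuples of integers in `[1, Y)` which may be the first component of a pair in
`dominatedPairs f k N` whose second component has the dominating entry `Y`. -/
noncomputable def tuplesBelow (f : ℤ[X]) (k Y : ℕ) : Finset (Fin k → ℤ) :=
  {x ∈ Fintype.piFinset fun _ => Ico 1 (Y : ℤ) | f.eval (Y : ℤ) ∣ ∏ i, ((Y : ℤ) - x i)}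

lemma prod_natAbs_eval_le {f : ℤ[X]} {A : ℝ} (hA : 0 < A)
    (natAbs_le : ∀ n : ℤ, 1 ≤ n → ((f.eval n).natAbs : ℝ) ≤ A * (n : ℝ) ^ f.natDegree)
    {k N : ℕ} {x : Fin k → ℤ} (hx : x ∈ box k N) :
    ((∏ i, (f.eval (x i)).natAbs : ℕ) : ℝ) ≤ A ^ k * (N : ℝ) ^ (f.natDegree * k) := by
  rw [Nat.cast_prod]
  calc ∏ i, ((f.eval (x i)).natAbs : ℝ) ≤ ∏ _i : Fin k, A * (N : ℝ) ^ f.natDegree := by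
        refine prod_le_prod (fun _ _ => by positivity) fun i _ => ?_
        obtain ⟨one_le, le_N⟩ := mem_box.mp hx i
        have : (0 : ℝ) ≤ x i := by exact_mod_cast zero_le_one.trans one_le
        refine (natAbs_le _ one_le).trans ?_
        gcongr
        exact_mod_cast le_N
    _ = A ^ k * (N : ℝ) ^ (f.natDegree * k) := by
        rw [prod_const, card_univ, Fintype.card_fin, mul_pow, pow_mul]

open Classical in
lemma exists_card_filter_dvd_nodal_sub_le {f : ℤ[X]} (hf : 0 < f.natDegree)
    (hne : ∀ n : ℤ, 1 ≤ n → f.eval n ≠ 0) (k : ℕ) {ε : ℝ} (hε : 0 < ε) :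
    ∃ C : ℝ, 0 < C ∧ ∀ N : ℕ, 1 ≤ N → ∀ x ∈ box k N,
      (#{y ∈ box k N | f ∣ nodal univ x - nodal univ y} : ℝ) ≤ C * (N : ℝ) ^ ε := by
  obtain ⟨A, hA, natAbs_le⟩ := exists_natAbs_eval_le_mul_pow f
  obtain ⟨C, hC, card_divisors_le⟩ :=
    exists_card_divisors_pow_le_of_le_mul_pow hε (pow_pos hA k) (f.natDegree * k) k
  refine ⟨(2 * f.natDegree) ^ k * C, by positivity, fun N hN x hx => ?_⟩
  have eval_ne (i) : f.eval (x i) ≠ 0 := hne _ (mem_box.mp hx i).1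
  set T := ∏ i, (f.eval (x i)).natAbs
  have T_ne : T ≠ 0 := prod_ne_zero_iff.mpr fun i _ => Int.natAbs_ne_zero.mpr (eval_ne i)
  calc (#{y ∈ box k N | f ∣ nodal univ x - nodal univ y} : ℝ)
      ≤ ((2 * f.natDegree * #T.divisors) ^ k : ℕ) := by
        have := card_filter_dvd_nodal_sub_le hf (Icc 1 (N : ℤ)) eval_ne
        rw [Fintype.card_fin] at this
        exact_mod_cast this
    _ = (2 * f.natDegree) ^ k * (#T.divisors : ℝ) ^ k := by push_cast; rw [mul_pow]
    _ ≤ (2 * f.natDegree) ^ k * (C * (N : ℝ) ^ ε) := by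
        gcongr
        exact card_divisors_le N (mod_cast hN) T T_ne (prod_natAbs_eval_le hA natAbs_le hx)
    _ = (2 * f.natDegree) ^ k * C * (N : ℝ) ^ ε := (mul_assoc _ _ _).symm

lemma exists_card_tuplesBelow_le {f : ℤ[X]} (hne : ∀ n : ℤ, 1 ≤ n → f.eval n ≠ 0) (k : ℕ) {ε : ℝ}
    (hε : 0 < ε) :
    ∃ C : ℝ, 0 < C ∧ ∀ Y : ℕ, 1 ≤ Y →
      (#(tuplesBelow f k Y) : ℝ) ≤ C * (Y : ℝ) ^ ((k : ℝ) - f.natDegree + ε) := by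
  obtain ⟨A, hA, natAbs_le⟩ := exists_natAbs_eval_le_mul_pow f
  obtain ⟨B, hB, le_natAbs⟩ := exists_pow_le_mul_natAbs_eval hne
  obtain ⟨C, hC, card_divisors_le⟩ :=
    exists_card_divisors_pow_le_of_le_mul_pow hε hA f.natDegree k
  refine ⟨C * B, by positivity, fun Y hY => ?_⟩
  have one_le_Y : 1 ≤ (Y : ℤ) := mod_cast hY
  have Y_pos : (0 : ℝ) < Y := mod_cast hY
  set M := (f.eval (Y : ℤ)).natAbs
  have card_mul_M_le : (#(tuplesBelow f k Y) : ℝ) * M ≤ (#M.divisors : ℝ) ^ k * (Y : ℝ) ^ k := by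
    have := card_filter_dvd_prod_sub_mul_natAbs_le (ι := Fin k) Y (hne Y one_le_Y)
    rw [Fintype.card_fin] at this
    exact_mod_cast this
  rw [show (k : ℝ) - f.natDegree + ε = ε + k - f.natDegree by ring, Real.rpow_sub Y_pos,
    Real.rpow_add Y_pos, Real.rpow_natCast, Real.rpow_natCast, ← mul_div_assoc,
    le_div_iff₀ (by positivity)]
  calc (#(tuplesBelow f k Y) : ℝ) * (Y : ℝ) ^ f.natDegree
      ≤ #(tuplesBelow f k Y) * (B * M) := by
        gcongr
        exact_mod_cast le_natAbs Y one_le_Y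
    _ = B * (#(tuplesBelow f k Y) * M) := by ring
    _ ≤ B * ((#M.divisors : ℝ) ^ k * (Y : ℝ) ^ k) := by gcongr
    _ ≤ B * (C * (Y : ℝ) ^ ε * (Y : ℝ) ^ k) := by
        gcongr
        exact card_divisors_le Y (mod_cast hY) M (Int.natAbs_ne_zero.mpr (hne Y one_le_Y))
          (mod_cast natAbs_le Y one_le_Y)
    _ = C * B * ((Y : ℝ) ^ ε * (Y : ℝ) ^ k) := by ring

lemma exists_card_biUnion_tuplesBelow_le {f : ℤ[X]} (hne : ∀ n : ℤ, 1 ≤ n → f.eval n ≠ 0) {k : ℕ}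
    (hk : f.natDegree ≤ k) {ε : ℝ} (hε : 0 < ε) :
    ∃ C : ℝ, 0 < C ∧ ∀ N : ℕ, 1 ≤ N →
      (#((Icc 1 N).biUnion (tuplesBelow f k)) : ℝ) ≤
        C * (N : ℝ) ^ ((k : ℝ) - f.natDegree + 1 + ε) := by
  obtain ⟨C, hC, card_le⟩ := exists_card_tuplesBelow_le hne k hε
  refine ⟨C, hC, fun N hN => ?_⟩
  have exponent_nonneg : 0 ≤ (k : ℝ) - f.natDegree + ε :=
    add_nonneg (sub_nonneg.mpr (mod_cast hk)) hε.le
  calc (#((Icc 1 N).biUnion (tuplesBelow f k)) : ℝ)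
      ≤ ∑ Y ∈ Icc 1 N, (#(tuplesBelow f k Y) : ℝ) := mod_cast card_biUnion_le
    _ ≤ ∑ _Y ∈ Icc 1 N, C * (N : ℝ) ^ ((k : ℝ) - f.natDegree + ε) := by
        refine sum_le_sum fun Y hY => ?_
        obtain ⟨one_le, le_N⟩ := mem_Icc.mp hY
        refine (card_le Y one_le).trans ?_
        gcongr
    _ = C * (N : ℝ) ^ ((k : ℝ) - f.natDegree + 1 + ε) := by
        rw [sum_const, Nat.card_Icc, Nat.add_sub_cancel, nsmul_eq_mul, add_right_comm,
          Real.rpow_add_one (by positivity)]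
        ring

lemma image_fst_dominatedPairs_subset (f : ℤ[X]) (k N : ℕ) :
    (dominatedPairs f k N).image Prod.fst ⊆ (Icc 1 N).biUnion (tuplesBelow f k) := by
  refine image_subset_iff.mpr fun p hp => ?_
  obtain ⟨⟨hx, hy⟩, hdvd, j, hj⟩ := mem_dominatedPairs.mp hp
  obtain ⟨one_le, le_N⟩ := mem_box.mp hy j
  lift p.2 j to ℕ using zero_le_one.trans one_le with Y hY
  simp only [mem_biUnion, tuplesBelow, mem_filter, Fintype.mem_piFinset, mem_Ico, mem_Icc]
  exact ⟨Y, ⟨mod_cast one_le, mod_cast le_N⟩, fun i => ⟨(mem_box.mp hx i).1, hj i⟩,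
    hY ▸ eval_dvd_prod_of_dvd_nodal_sub hdvd j⟩

lemma exists_card_dominatedPairs_le {f : ℤ[X]} (hf : 0 < f.natDegree)
    (hne : ∀ n : ℤ, 1 ≤ n → f.eval n ≠ 0) {k : ℕ} (hk : f.natDegree ≤ k) {ε : ℝ} (hε : 0 < ε) :
    ∃ C : ℝ, 0 < C ∧ ∀ N : ℕ, 1 ≤ N →
      (#(dominatedPairs f k N) : ℝ) ≤ C * (N : ℝ) ^ ((k : ℝ) - f.natDegree + 1 + ε) := by
  classical
  obtain ⟨C₁, hC₁, card_tuples_le⟩ := exists_card_biUnion_tuplesBelow_le hne hk (half_pos hε)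
  obtain ⟨C₂, hC₂, card_fiber_le⟩ := exists_card_filter_dvd_nodal_sub_le hf hne k (half_pos hε)
  refine ⟨C₁ * C₂, by positivity, fun N hN => ?_⟩
  set firsts := (dominatedPairs f k N).image Prod.fst
  have card_fiber : ∀ x ∈ firsts,
      (#{p ∈ dominatedPairs f k N | p.1 = x} : ℝ) ≤ C₂ * (N : ℝ) ^ (ε / 2) := by
    intro x hx
    obtain ⟨p, hp, rfl⟩ := mem_image.mp hx
    refine le_trans (Nat.cast_le.mpr (card_le_card_of_injOn Prod.snd ?_ ?_))
      (card_fiber_le N hN p.1 (mem_dominatedPairs.mp hp).1.1)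
    · intro q hq
      obtain ⟨hq, fst_eq⟩ := mem_filter.mp hq
      obtain ⟨⟨-, hy⟩, hdvd, -⟩ := mem_dominatedPairs.mp hq
      exact mem_filter.mpr ⟨hy, fst_eq ▸ hdvd⟩
    · intro q hq q' hq' hqq'
      exact Prod.ext ((mem_filter.mp hq).2.trans (mem_filter.mp hq').2.symm) hqq'
  calc (#(dominatedPairs f k N) : ℝ)
      = ∑ x ∈ firsts, (#{p ∈ dominatedPairs f k N | p.1 = x} : ℝ) :=
        mod_cast card_eq_sum_card_image Prod.fst _
    _ ≤ #firsts * (C₂ * (N : ℝ) ^ (ε / 2)) := by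
        rw [← nsmul_eq_mul]
        exact sum_le_card_nsmul _ _ _ card_fiber
    _ ≤ C₁ * (N : ℝ) ^ ((k : ℝ) - f.natDegree + 1 + ε / 2) * (C₂ * (N : ℝ) ^ (ε / 2)) := by
        gcongr
        exact (Nat.cast_le.mpr (card_le_card (image_fst_dominatedPairs_subset f k N))).trans
          (card_tuples_le N hN)
    _ = C₁ * C₂ * (N : ℝ) ^ ((k : ℝ) - f.natDegree + 1 + ε) := by
        rw [mul_mul_mul_comm, ← Real.rpow_add (by positivity)]
        ring_nf

lemma nondiagonalPairs_eq_empty {f : ℤ[X]} {k : ℕ} (hk : k ≤ f.natDegree) (N : ℕ) :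
    nondiagonalPairs f k N = ∅ := by
  refine eq_empty_of_forall_notMem fun p hp => ?_
  obtain ⟨-, hdvd, hne⟩ := mem_nondiagonalPairs.mp hp
  exact (natDegree_lt_card_of_dvd_nodal_sub hdvd hne).not_ge (by simpa using hk)

lemma card_filter_nondiagonalPairs_le {f : ℤ[X]} (hne : ∀ n : ℤ, 1 ≤ n → f.eval n ≠ 0) (k N : ℕ)
    (i j : Fin (k + 1)) :
    #{p ∈ nondiagonalPairs f (k + 1) N | p.1 i = p.2 j} ≤ N * #(nondiagonalPairs f k N) := by
  set insertPair := fun q : ℤ × (Fin k → ℤ) × (Fin k → ℤ) =>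
    ((i.insertNth q.1 q.2.1 : Fin (k + 1) → ℤ), (j.insertNth q.1 q.2.2 : Fin (k + 1) → ℤ))
  have subset_image : {p ∈ nondiagonalPairs f (k + 1) N | p.1 i = p.2 j} ⊆
      (Icc 1 (N : ℤ) ×ˢ nondiagonalPairs f k N).image insertPair := by
    rintro ⟨x, y⟩ hp
    simp only [mem_filter, mem_nondiagonalPairs, mem_box] at hp
    obtain ⟨⟨⟨hx, hy⟩, hdvd, hxy⟩, hij⟩ := hp
    rw [← sub_ne_zero, nodal_sub_nodal_eq_X_sub_C_mul hij] at hxy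
    rw [nodal_sub_nodal_eq_X_sub_C_mul hij] at hdvd
    simp only [mem_image, mem_product, mem_nondiagonalPairs, mem_box, mem_Icc]
    refine ⟨(x i, i.removeNth x, j.removeNth y), ⟨hx i, ⟨fun l => hx _, fun l => hy _⟩,
      dvd_of_dvd_X_sub_C_mul (hne _ (hx i).1) hdvd,
      sub_ne_zero.mp (right_ne_zero_of_mul hxy)⟩, Prod.ext ?_ ?_⟩
    · exact Fin.insertNth_self_removeNth i x
    · exact hij ▸ Fin.insertNth_self_removeNth j y
  calc _ ≤ #(Icc 1 (N : ℤ) ×ˢ nondiagonalPairs f k N) :=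
        (card_le_card subset_image).trans card_image_le
    _ = N * #(nondiagonalPairs f k N) := by simp [card_product]

/- If no entry of `x` equals an entry of `y`, then the largest of all `2 (k + 1)` entries occurs in
only one of the two tuples, which therefore dominates the other. -/
lemma nondiagonalPairs_subset (f : ℤ[X]) (k N : ℕ) :
    nondiagonalPairs f (k + 1) N ⊆
      (univ : Finset (Fin (k + 1) × Fin (k + 1))).biUnion
        (fun ij => {p ∈ nondiagonalPairs f (k + 1) N | p.1 ij.1 = p.2 ij.2}) ∪
      (dominatedPairs f (k + 1) N ∪ (dominatedPairs f (k + 1) N).image Prod.swap) := by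
  intro p hp
  simp only [mem_union, mem_biUnion, mem_univ, true_and, mem_filter, Prod.exists, mem_image, hp]
  obtain ⟨hbox, hdvd, -⟩ := mem_nondiagonalPairs.mp hp
  by_cases common : ∃ i j, p.1 i = p.2 j
  · exact Or.inl common
  push Not at common
  obtain ⟨i, le_i⟩ := Finite.exists_max p.1
  obtain ⟨j, le_j⟩ := Finite.exists_max p.2
  refine Or.inr ((common i j).lt_or_gt.imp (fun lt => ?_) fun lt => ⟨p.2, p.1, ?_, rfl⟩)
  · exact mem_dominatedPairs.mpr ⟨hbox, hdvd, j, fun l => (le_i l).trans_lt lt⟩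
  · exact mem_dominatedPairs.mpr ⟨hbox.symm, dvd_sub_comm.mp hdvd, i, fun l => (le_j l).trans_lt lt⟩

lemma card_nondiagonalPairs_succ_le {f : ℤ[X]} (hne : ∀ n : ℤ, 1 ≤ n → f.eval n ≠ 0) (k N : ℕ) :
    #(nondiagonalPairs f (k + 1) N) ≤
      (k + 1) ^ 2 * (N * #(nondiagonalPairs f k N)) + 2 * #(dominatedPairs f (k + 1) N) := by
  refine (card_le_card (nondiagonalPairs_subset f k N)).trans ((card_union_le _ _).trans ?_)
  refine Nat.add_le_add ?_ ?_
  · refine card_biUnion_le.trans ((sum_le_card_nsmul _ _ _ fun ij _ =>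
      card_filter_nondiagonalPairs_le hne k N ij.1 ij.2).trans_eq ?_)
    simp [sq]
  · rw [two_mul]
    exact (card_union_le _ _).trans (Nat.add_le_add_left card_image_le _)

lemma exists_card_nondiagonalPairs_le {f : ℤ[X]} (hf : 0 < f.natDegree)
    (hne : ∀ n : ℤ, 1 ≤ n → f.eval n ≠ 0) {k : ℕ} (hk : f.natDegree ≤ k) {ε : ℝ} (hε : 0 < ε) :
    ∃ C : ℝ, 0 < C ∧ ∀ N : ℕ, 1 ≤ N →
      (#(nondiagonalPairs f k N) : ℝ) ≤ C * (N : ℝ) ^ ((k : ℝ) - f.natDegree + 1 + ε) := by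
  induction k, hk using Nat.le_induction with
  | base =>
    refine ⟨1, one_pos, fun N _ => ?_⟩
    rw [nondiagonalPairs_eq_empty le_rfl, card_empty, Nat.cast_zero]
    positivity
  | succ k hk ih =>
    obtain ⟨C₁, hC₁, card_nondiagonal_le⟩ := ih
    obtain ⟨C₂, hC₂, card_dominated_le⟩ :=
      exists_card_dominatedPairs_le hf hne (hk.trans k.le_succ) hε
    refine ⟨(k + 1) ^ 2 * C₁ + 2 * C₂, by positivity, fun N hN => ?_⟩
    set s := (k : ℝ) - f.natDegree + 1 + ε with hs
    have succ_exponent : ((k + 1 : ℕ) : ℝ) - f.natDegree + 1 + ε = s + 1 := by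
      rw [hs]; push_cast; ring
    rw [succ_exponent] at card_dominated_le ⊢
    calc (#(nondiagonalPairs f (k + 1) N) : ℝ)
        ≤ (k + 1) ^ 2 * (N * #(nondiagonalPairs f k N)) + 2 * #(dominatedPairs f (k + 1) N) :=
          mod_cast card_nondiagonalPairs_succ_le hne k N
      _ ≤ (k + 1) ^ 2 * (N * (C₁ * (N : ℝ) ^ s)) + 2 * (C₂ * (N : ℝ) ^ (s + 1)) := by
          gcongr
          exacts [card_nondiagonal_le N hN, card_dominated_le N hN]
      _ = ((k + 1) ^ 2 * C₁ + 2 * C₂) * (N : ℝ) ^ (s + 1) := by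
          rw [Real.rpow_add_one (by positivity)]
          ring

lemma exists_card_nondiagonalPairs_floor_le {f : ℤ[X]} (hf : 0 < f.natDegree)
    (hne : ∀ n : ℤ, 1 ≤ n → f.eval n ≠ 0) (k : ℕ) {ε : ℝ} (hε : 0 < ε) :
    ∃ C : ℝ, 0 < C ∧ ∀ X : ℝ, 1 ≤ X →
      (#(nondiagonalPairs f k ⌊X⌋₊) : ℝ) ≤ C * X ^ ((k : ℝ) - f.natDegree + 1 + ε) := by
  obtain hk | hk := lt_or_ge k f.natDegree
  · refine ⟨1, one_pos, fun X hX => ?_⟩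
    rw [nondiagonalPairs_eq_empty hk.le, card_empty, Nat.cast_zero]
    positivity
  · obtain ⟨C, hC, card_le⟩ := exists_card_nondiagonalPairs_le hf hne hk hε
    refine ⟨C, hC, fun X hX => (card_le ⌊X⌋₊ ((Nat.one_le_floor_iff X).mpr hX)).trans ?_⟩
    have exponent_nonneg : 0 ≤ (k : ℝ) - f.natDegree + 1 + ε := by
      have : (f.natDegree : ℝ) ≤ k := mod_cast hk
      linarith
    gcongr
    exact Nat.floor_le (zero_le_one.trans hX)

end Counting

section IntMinpoly

variable {A : Type*} [CommRing A] [Algebra ℚ A]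

/-- The primitive integer multiple of the minimal polynomial of `α` over `ℚ`; the choice of sign is
the one made by `Polynomial.primPart`. For `α` algebraic, it generates the ideal of integer
polynomials vanishing at `α`. -/
noncomputable def intMinpoly (α : A) : ℤ[X] :=
  (IsLocalization.integerNormalization (nonZeroDivisors ℤ) (minpoly ℚ α)).primPart

lemma associated_map_intMinpoly {α : A} (hα : IsAlgebraic ℚ α) :
    Associated ((intMinpoly α).map (algebraMap ℤ ℚ)) (minpoly ℚ α) := by
  set g := IsLocalization.integerNormalization (nonZeroDivisors ℤ) (minpoly ℚ α) with hg
  obtain ⟨b, hb, map_g⟩ :=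
    IsLocalization.integerNormalization_spec (nonZeroDivisors ℤ) (minpoly ℚ α)
  have content_ne : ((g.content : ℤ) : ℚ) ≠ 0 := by
    rw [Int.cast_ne_zero, Ne, content_eq_zero_iff, hg,
      IsLocalization.integerNormalization_eq_zero_iff le_rfl]
    exact minpoly.ne_zero hα.isIntegral
  have b_ne : (b : ℚ) ≠ 0 := Int.cast_ne_zero.mpr (nonZeroDivisors.ne_zero hb)
  have map_eq : C (g.content : ℚ) * (intMinpoly α).map (algebraMap ℤ ℚ) =
      C (b : ℚ) * minpoly ℚ α := by
    calc C (g.content : ℚ) * (intMinpoly α).map (algebraMap ℤ ℚ)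
        = (C g.content * g.primPart).map (algebraMap ℤ ℚ) := by
          rw [Polynomial.map_mul, map_C, eq_intCast]; rfl
      _ = C (b : ℚ) * minpoly ℚ α := by
          rw [← eq_C_content_mul_primPart, map_g, ← smul_eq_C_mul, Int.cast_smul_eq_zsmul]
  exact (associated_unit_mul_left _ _ (isUnit_C.mpr content_ne.isUnit)).symm.trans
    (map_eq ▸ associated_unit_mul_left _ _ (isUnit_C.mpr b_ne.isUnit))

lemma natDegree_intMinpoly {α : A} (hα : IsAlgebraic ℚ α) :
    (intMinpoly α).natDegree = (minpoly ℚ α).natDegree := by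
  rw [← natDegree_map_eq_of_injective (algebraMap ℤ ℚ).injective_int,
    natDegree_eq_of_degree_eq (degree_eq_degree_of_associated (associated_map_intMinpoly hα))]

lemma intMinpoly_dvd_iff {α : A} (hα : IsAlgebraic ℚ α) {P : ℤ[X]} :
    intMinpoly α ∣ P ↔ aeval α P = 0 := by
  rw [← aeval_map_algebraMap ℚ α P, ← minpoly.dvd_iff,
    ← (associated_map_intMinpoly hα).dvd_iff_dvd_left]
  exact ⟨fun h => map_dvd (mapRingHom (algebraMap ℤ ℚ)) h, fun h =>
    (isPrimitive_primPart _).dvd_of_fraction_map_dvd_fraction_map h⟩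

lemma eval_intMinpoly_ne_zero [IsDomain A] {α : A} (hα : IsAlgebraic ℚ α) {n : ℤ}
    (hn : (n : A) ≠ α) : (intMinpoly α).eval n ≠ 0 := by
  intro eval_eq_zero
  have isRoot_map : IsRoot ((intMinpoly α).map (algebraMap ℤ ℚ)) (n : ℚ) := by
    rw [IsRoot.def, eval_intCast_map, Int.cast_id, eval_eq_zero, map_zero]
  have algebraMap_eq : algebraMap ℚ A n = α :=
    minpoly.root hα.isIntegral (isRoot_map.dvd (associated_map_intMinpoly hα).dvd)
  exact hn (by rwa [map_intCast] at algebraMap_eq)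

end IntMinpoly

section Shift

variable {A : Type*} [CommRing A] [Algebra ℚ A]

lemma intMinpoly_neg_dvd_nodal_sub_iff {ι : Type*} [Fintype ι] {θ : A} (hθ : IsAlgebraic ℚ θ)
    {x y : ι → ℤ} :
    intMinpoly (-θ) ∣ nodal univ x - nodal univ y ↔
      ∏ i, ((x i : A) + θ) = ∏ i, ((y i : A) + θ) := by
  have aeval_nodal (z : ι → ℤ) :
      aeval (-θ) (nodal univ z) = (-1) ^ Fintype.card ι * ∏ i, ((z i : A) + θ) := by
    rw [nodal_eq, map_prod, ← card_univ, ← prod_neg]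
    refine prod_congr rfl fun i _ => ?_
    simp
    ring
  rw [intMinpoly_dvd_iff hθ.neg, map_sub, sub_eq_zero, aeval_nodal, aeval_nodal]
  exact (isUnit_one.neg.pow _).mul_right_inj

lemma natDegree_minpoly_neg (θ : A) : (minpoly ℚ (-θ)).natDegree = (minpoly ℚ θ).natDegree := by
  have associated : Associated ((minpoly ℚ θ).comp (-X)) (minpoly ℚ (-θ)) := by
    rw [minpoly.neg]
    exact associated_unit_mul_right _ _ (isUnit_one.neg.pow _)
  rw [← natDegree_eq_of_degree_eq (degree_eq_degree_of_associated associated), natDegree_comp,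
    natDegree_neg, natDegree_X, mul_one]

lemma intCast_add_ne_zero_of_two_le_natDegree_minpoly [Nontrivial A] {θ : A}
    (h : 2 ≤ (minpoly ℚ θ).natDegree) (n : ℤ) : (n : A) + θ ≠ 0 := by
  intro add_eq_zero
  have natDegree_eq_one : (minpoly ℚ θ).natDegree = 1 := minpoly.natDegree_eq_one_iff.mpr
    ⟨-(n : ℚ), by rw [map_neg, map_intCast, eq_neg_of_add_eq_zero_right add_eq_zero]⟩
  lia

end Shift

end Paucity

open Paucity Finset in
theorem paucity_nondiagonal_small_degree_general {A : Type*} [CommRing A] [IsDomain A]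
    [Algebra ℚ A] (k d : ℕ) (θ : A) (hθ : IsAlgebraic ℚ θ) (hdeg : (minpoly ℚ θ).natDegree = d)
    (hne : ∀ n : ℤ, 1 ≤ n → (n : A) + θ ≠ 0) (ε : ℝ) (hε : 0 < ε) :
    ∃ C : ℝ, 0 < C ∧ ∀ X : ℝ, 1 ≤ X →
      ({p : (Fin k → ℤ) × (Fin k → ℤ) |
          (∀ i, 1 ≤ p.1 i ∧ (p.1 i : ℝ) ≤ X) ∧ (∀ i, 1 ≤ p.2 i ∧ (p.2 i : ℝ) ≤ X) ∧
          ∏ i, ((p.1 i : A) + θ) = ∏ i, ((p.2 i : A) + θ) ∧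
          ¬ ∃ σ : Equiv.Perm (Fin k), ∀ i, p.2 i = p.1 (σ i)}.ncard : ℝ)
        ≤ C * X ^ ((k : ℝ) - d + 1 + ε) := by
  have natDegree_eq : (intMinpoly (-θ)).natDegree = d := by
    rw [natDegree_intMinpoly hθ.neg, natDegree_minpoly_neg, hdeg]
  have natDegree_pos : 0 < (intMinpoly (-θ)).natDegree := by
    rw [natDegree_eq, ← hdeg]
    exact minpoly.natDegree_pos hθ.isIntegral
  have eval_ne (n : ℤ) (hn : 1 ≤ n) : (intMinpoly (-θ)).eval n ≠ 0 :=
    eval_intMinpoly_ne_zero hθ.neg fun n_eq => hne n hn (by rw [n_eq, neg_add_cancel])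
  obtain ⟨C, hC, card_le⟩ := exists_card_nondiagonalPairs_floor_le natDegree_pos eval_ne k hε
  refine ⟨C, hC, fun X hX => le_trans ?_ (natDegree_eq ▸ card_le X hX)⟩
  rw [← Set.ncard_coe_finset]
  refine Nat.cast_le.mpr (Set.ncard_le_ncard ?_ (finite_toSet _))
  rintro ⟨x, y⟩ ⟨hx, hy, prod_eq, not_perm⟩
  have mem_box_floor {z : Fin k → ℤ} (hz : ∀ i, 1 ≤ z i ∧ (z i : ℝ) ≤ X) : z ∈ box k ⌊X⌋₊ := by
    refine mem_box.mpr fun i => ⟨(hz i).1, ?_⟩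
    rw [Int.natCast_floor_eq_floor (zero_le_one.trans hX)]
    exact Int.le_floor.mpr (hz i).2
  exact mem_nondiagonalPairs.mpr ⟨⟨mem_box_floor hx, mem_box_floor hy⟩,
    (intMinpoly_neg_dvd_nodal_sub_iff hθ).mpr prod_eq,
    fun h => not_perm (exists_perm_of_nodal_eq h)⟩

/-- **Theorem 1.2 (Heap–Sahay–Wooley).**
If `θ ∈ ℂ` is algebraic over `ℚ` of degree `d` with `2 ≤ d < k`, then for every `ε > 0`
there is `C > 0` such that for `X ≥ 2` the number of non-diagonal solutions of
`(x₁+θ)⋯(x_k+θ) = (y₁+θ)⋯(y_k+θ)` with `1 ≤ x_i, y_i ≤ X` is at most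
`C · X^(k−d+1+ε)`. -/
theorem paucity_nondiagonal_small_degree (k d : ℕ) (hk : 0 < k) (θ : ℂ)
    (hθ : IsAlgebraic ℚ θ) (hdeg : (minpoly ℚ θ).natDegree = d)
    (hd2 : 2 ≤ d) (hdk : d < k) (ε : ℝ) (hε : 0 < ε) :
    ∃ C : ℝ, 0 < C ∧ ∀ X : ℝ, 2 ≤ X →
      ({p : (Fin k → ℤ) × (Fin k → ℤ) |
          (∀ i, 1 ≤ p.1 i ∧ (p.1 i : ℝ) ≤ X) ∧ (∀ i, 1 ≤ p.2 i ∧ (p.2 i : ℝ) ≤ X) ∧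
          ∏ i, ((p.1 i : ℂ) + θ) = ∏ i, ((p.2 i : ℂ) + θ) ∧
          ¬ ∃ σ : Equiv.Perm (Fin k), ∀ i, p.2 i = p.1 (σ i)}.ncard : ℝ)
        ≤ C * X ^ ((k : ℝ) - d + 1 + ε) := by
  obtain ⟨C, hC, ncard_le⟩ := paucity_nondiagonal_small_degree_general k d θ hθ hdeg
    (fun n _ => Paucity.intCast_add_ne_zero_of_two_le_natDegree_minpoly (hdeg ▸ hd2) n) ε hε
  exact ⟨C, hC, fun X hX => ncard_le X (one_le_two.trans hX)⟩
end

section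
/- Let k be a positive integer and let θ ∈ ℂ with θ ∉ ℚ (θ is either irrational algebraic or transcendental over ℚ). Then for every ε > 0 there exists a constant C > 0 such that for all real X ≥ 2, the number N_k(X) of 2k-tuples of integers (x₁,…,x_k,y₁,…,y_k) with 1 ≤ x_i, y_i ≤ X for all i and (x₁+θ)⋯(x_k+θ) = (y₁+θ)⋯(y_k+θ) satisfies |N_k(X) − k!·⌊X⌋^k| ≤ C·X^{k−1+ε}. -/
/-!
If `θ` is transcendental, `y` is always a permutation of `x`. Otherwise let `f ∈ ℤ[X]` be the
primitive minimal polynomial of `-θ`. A solution `(x, y)` makes `f` divide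
`∏ (X - x_i) - ∏ (X - y_i)`, hence `∏ f(x_i) = ∏ f(y_i)` by comparing resultants with `f`, and by
the divisor bound each `x ∈ [1, n]^k` is completed by only `O(n^ε)` tuples `y ∈ [1, n]^k`.

Consider a nontrivial solution, one where `y` is not a permutation of `x`. A common entry
`x_i = y_j` cancels, which is handled by induction on `k`. Otherwise the largest entry overall is,
say, `Y = y_j`, and `f(Y)` divides `∏ (Y - x_i) ≤ Y^k`. As `deg f ≥ 2`, we have `|f(Y)| ≫ Y²`, so
there are `O(Y^(k-2))` values of this product, and `O(n^(k-2+ε))` tuples `x` for each of the `n`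
choices of `Y`. Thus nontrivial solutions contribute `O(n^(k-1+ε))`, and the trivial ones number
`k! n^k + O(n^(k-1))`.
-/

section
open Polynomial Filter Asymptotics Finset

/-! ### The divisor bound -/

theorem exists_add_one_le_mul_pow_rpow {δ : ℝ} (hδ : 0 < δ) :
    ∃ K : ℝ, 1 ≤ K ∧ ∀ (b : ℝ) (a : ℕ), 2 ≤ b → (a : ℝ) + 1 ≤ K * (b ^ a) ^ δ := by
  have hlog : 0 < δ * Real.log 2 := mul_pos hδ (Real.log_pos one_lt_two)
  refine ⟨max 1 (δ * Real.log 2)⁻¹, le_max_left _ _, fun b a hb ↦ ?_⟩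
  set K := max 1 (δ * Real.log 2)⁻¹
  have hK : 1 ≤ K * (δ * Real.log 2) := (inv_le_iff_one_le_mul₀ hlog).1 (le_max_right _ _)
  have hexp : 1 + a * (δ * Real.log 2) ≤ ((2 : ℝ) ^ a) ^ δ := by
    rw [← Real.rpow_natCast, ← Real.rpow_mul zero_le_two, Real.rpow_def_of_pos two_pos]
    linarith [Real.add_one_le_exp (Real.log 2 * (a * δ))]
  calc (a : ℝ) + 1 ≤ K * (1 + a * (δ * Real.log 2)) := by
        linarith [le_max_left 1 (δ * Real.log 2)⁻¹,
          mul_le_mul_of_nonneg_left hK (Nat.cast_nonneg (α := ℝ) a)]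
    _ ≤ K * (b ^ a) ^ δ := by gcongr; exact hexp.trans (by gcongr)

theorem add_one_le_pow_rpow_of_two_le_rpow {b δ : ℝ} (hb : 0 ≤ b) (h : 2 ≤ b ^ δ) (a : ℕ) :
    (a : ℝ) + 1 ≤ (b ^ a) ^ δ := by
  calc (a : ℝ) + 1 ≤ 2 ^ a := mod_cast Nat.lt_two_pow_self
    _ ≤ (b ^ δ) ^ a := by gcongr
    _ = (b ^ a) ^ δ := (Real.rpow_pow_comm hb δ a)

theorem natCast_rpow_eq_prod_primeFactors {n : ℕ} (hn : n ≠ 0) (δ : ℝ) :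
    (n : ℝ) ^ δ = ∏ p ∈ n.primeFactors, ((p : ℝ) ^ n.factorization p) ^ δ := by
  rw [Real.finsetProd_rpow _ _ fun _ _ ↦ by positivity]
  conv_lhs => rw [← Nat.prod_factorization_pow_eq_self hn, Finsupp.prod]
  push_cast
  rfl

theorem exists_card_divisors_le_mul_rpow {δ : ℝ} (hδ : 0 < δ) :
    ∃ C : ℝ, 0 < C ∧ ∀ n : ℕ, n ≠ 0 → (#n.divisors : ℝ) ≤ C * (n : ℝ) ^ δ := by
  obtain ⟨K, hK, hsmall⟩ := exists_add_one_le_mul_pow_rpow hδ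
  set N := ⌈(2 : ℝ) ^ δ⁻¹⌉₊
  have hlarge (p a : ℕ) (hp : N ≤ p) : (a : ℝ) + 1 ≤ ((p : ℝ) ^ a) ^ δ := by
    refine add_one_le_pow_rpow_of_two_le_rpow p.cast_nonneg ?_ a
    exact (Real.rpow_inv_le_iff_of_pos zero_le_two p.cast_nonneg hδ).1 (Nat.ceil_le.1 hp)
  refine ⟨K ^ N, by positivity, fun n hn ↦ ?_⟩
  have hcount : ∏ p ∈ n.primeFactors, (if p < N then K else 1) ≤ K ^ N := by
    rw [← prod_filter, prod_const]
    refine pow_le_pow_right₀ hK ?_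
    calc #{p ∈ n.primeFactors | p < N} ≤ #(range N) :=
          card_le_card fun p hp ↦ mem_range.2 (mem_filter.1 hp).2
      _ = N := card_range N
  calc (#n.divisors : ℝ) = ∏ p ∈ n.primeFactors, ((n.factorization p : ℝ) + 1) := by
        rw [Nat.card_divisors hn]; push_cast; rfl
    _ ≤ ∏ p ∈ n.primeFactors,
          ((if p < N then K else 1) * ((p : ℝ) ^ n.factorization p) ^ δ) := by
        refine prod_le_prod (fun _ _ ↦ by positivity) fun p hp ↦ ?_
        split_ifs with hpN
        · exact hsmall p _ (mod_cast (Nat.prime_of_mem_primeFactors hp).two_le)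
        · rw [one_mul]; exact hlarge p _ (not_lt.1 hpN)
    _ ≤ K ^ N * (n : ℝ) ^ δ := by
        rw [prod_mul_distrib, natCast_rpow_eq_prod_primeFactors hn]; gcongr

/-! ### Integer polynomials -/

theorem exists_irreducible_forall_dvd_of_isAlgebraic {K : Type*} [Field K] [CharZero K] {θ : K}
    (hθ : IsAlgebraic ℤ θ) :
    ∃ f : ℤ[X], Irreducible f ∧ aeval θ f = 0 ∧ ∀ F : ℤ[X], aeval θ F = 0 → f ∣ F := by
  obtain ⟨F₀, hF₀, hroot⟩ := hθ
  have hker : RingHom.ker (aeval (R := ℤ) θ) ≠ ⊥ := fun h ↦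
    hF₀ <| by simpa [h] using (RingHom.mem_ker (f := aeval (R := ℤ) θ)).2 hroot
  obtain ⟨f, hfmem, hfprime⟩ :=
    (RingHom.ker_isPrime (aeval (R := ℤ) θ)).exists_mem_prime_of_ne_bot hker
  have hfroot : aeval θ f = 0 := hfmem
  have aeval_map (F : ℤ[X]) : aeval θ (F.map (Int.castRingHom ℚ)) = aeval θ F :=
    aeval_map_algebraMap ℚ θ F
  have hprim : f.IsPrimitive := by
    refine hfprime.irreducible.isPrimitive fun hdeg ↦ hfprime.ne_zero ?_
    rw [eq_C_of_natDegree_eq_zero hdeg] at hfroot ⊢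
    simpa using hfroot
  have hirr := (IsPrimitive.Int.irreducible_iff_irreducible_map_cast hprim).1 hfprime.irreducible
  have hint : IsIntegral ℚ θ := IsAlgebraic.isIntegral
    ⟨_, hirr.ne_zero, (aeval_map f).trans hfroot⟩
  have hminpoly : f.map (Int.castRingHom ℚ) ∣ minpoly ℚ θ :=
    (minpoly.irreducible hint).dvd_symm hirr (minpoly.dvd ℚ θ ((aeval_map f).trans hfroot))
  refine ⟨f, hfprime.irreducible, hfroot, fun F hF ↦ ?_⟩
  rw [IsPrimitive.Int.dvd_iff_map_cast_dvd_map_cast _ _ hprim]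
  exact hminpoly.trans (minpoly.dvd ℚ θ ((aeval_map F).trans hF))

theorem two_le_natDegree_of_aeval_eq_zero {K : Type*} [Field K] [CharZero K] {θ : K}
    (hθ : ∀ q : ℚ, θ ≠ q) {f : ℤ[X]} (hf : f ≠ 0) (hroot : aeval θ f = 0) :
    2 ≤ f.natDegree := by
  by_contra! hdeg
  rw [eq_X_add_C_of_natDegree_le_one (p := f) (by lia)] at hroot hf
  simp only [map_add, map_mul, aeval_C, aeval_X, algebraMap_int_eq, Int.coe_castRingHom] at hroot
  rcases eq_or_ne (f.coeff 1) 0 with hslope | hslope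
  · simp_all
  · apply hθ (-f.coeff 0 / f.coeff 1)
    push_cast
    rw [eq_div_iff (mod_cast hslope)]
    linear_combination hroot

theorem isBigO_intCast_eval {P Q : ℤ[X]} (h : P.degree ≤ Q.degree) :
    (fun z : ℤ ↦ ((P.eval z : ℤ) : ℝ)) =O[cofinite] fun z : ℤ ↦ ((Q.eval z : ℤ) : ℝ) := by
  have hdeg : (P.map (Int.castRingHom ℝ)).degree ≤ (Q.map (Int.castRingHom ℝ)).degree := by
    rwa [degree_map_eq_of_injective (RingHom.injective_int _),
      degree_map_eq_of_injective (RingHom.injective_int _)]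
  have hcast : Tendsto ((↑) : ℤ → ℝ) cofinite (Bornology.cobounded ℝ) := by
    rw [Metric.cobounded_eq_cocompact]
    exact Int.tendsto_coe_cofinite
  have heval (F : ℤ[X]) (z : ℤ) : (F.map (Int.castRingHom ℝ)).eval (z : ℝ) = (F.eval z : ℤ) := by
    simp [eval_intCast_map]
  simpa only [Function.comp_def, heval] using
    (isBigO_cobounded_of_degree_le hdeg).comp_tendsto hcast

/-- The monic polynomial `∏ (X - x_i)` whose roots are the entries of the tuple `x`. Two tuples are
permutations of each other exactly when these polynomials agree. -/
noncomputable def rootPoly {R ι : Type*} [CommRing R] [Fintype ι] (x : ι → R) : R[X] :=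
  ∏ i, (X - C (x i))

section
variable {R ι : Type*} [CommRing R] [Fintype ι]

theorem eval_rootPoly (x : ι → R) (r : R) : (rootPoly x).eval r = ∏ i, (r - x i) := by
  simp [rootPoly, eval_prod]

theorem aeval_neg_rootPoly {A : Type*} [CommRing A] [Algebra R A] (θ : A) (x : ι → R) :
    aeval (-θ) (rootPoly x) = (-1) ^ Fintype.card ι * ∏ i, (algebraMap R A (x i) + θ) := by
  simp only [rootPoly, map_prod, map_sub, aeval_X, aeval_C, ← card_univ, ← prod_const,
    ← prod_mul_distrib]
  exact prod_congr rfl fun i _ ↦ by ring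

theorem resultant_rootPoly [Nontrivial R] (x : ι → R) (f : R[X]) :
    (rootPoly x).resultant f (Fintype.card ι) f.natDegree = ∏ i, f.eval (x i) := by
  conv_lhs => rw [rootPoly]
  have hdeg : (∏ i, (X - C (x i))).natDegree = Fintype.card ι := by
    simp
  rw [← hdeg, resultant_prod_left _ _ _ _ (by simp) le_rfl]
  simp

variable [IsDomain R]

theorem natDegree_rootPoly (x : ι → R) : (rootPoly x).natDegree = Fintype.card ι := by
  simp [rootPoly]

theorem roots_rootPoly (x : ι → R) : (rootPoly x).roots = univ.val.map x := by
  rw [← roots_multiset_prod_X_sub_C (univ.val.map x), Multiset.map_map]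
  rfl

theorem prod_eval_eq_of_dvd_rootPoly_sub {f : R[X]} {x y : ι → R}
    (h : f ∣ rootPoly x - rootPoly y) : ∏ i, f.eval (x i) = ∏ i, f.eval (y i) := by
  rw [← resultant_rootPoly, ← resultant_rootPoly]
  obtain ⟨q, hq⟩ := h
  rw [sub_eq_iff_eq_add'.1 hq]
  rcases eq_or_ne (f * q) 0 with hzero | hzero
  · rw [hzero, add_zero]
  refine resultant_add_mul_left _ _ _ _ _ ?_ le_rfl
  rw [add_comm, ← natDegree_mul (left_ne_zero_of_mul hzero) (right_ne_zero_of_mul hzero), ← hq]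
  exact (natDegree_sub_le_of_le (natDegree_rootPoly x).le (natDegree_rootPoly y).le).trans
    (max_self _).le

theorem exists_perm_of_map_univ_eq {α : Type*} {x y : ι → α}
    (h : univ.val.map x = univ.val.map y) : ∃ σ : Equiv.Perm ι, y ∘ σ = x := by
  classical
  have hcard (a : α) : Fintype.card {i // x i = a} = Fintype.card {i // y i = a} := by
    have := congrArg (Multiset.count a) h
    rw [Multiset.count_map, Multiset.count_map] at this
    simpa only [Fintype.card_subtype, eq_comm (a := a), card_def, filter_val] using this
  refine ⟨Equiv.ofFiberEquiv fun a ↦ Fintype.equivOfCardEq (hcard a), ?_⟩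
  funext i
  exact Equiv.ofFiberEquiv_map _ i

theorem rootPoly_eq_iff {x y : ι → R} :
    rootPoly x = rootPoly y ↔ ∃ σ : Equiv.Perm ι, y ∘ σ = x := by
  refine ⟨fun h ↦ exists_perm_of_map_univ_eq ?_, ?_⟩
  · rw [← roots_rootPoly, ← roots_rootPoly, h]
  · rintro ⟨σ, rfl⟩
    exact Equiv.prod_comp σ fun i ↦ X - C (y i)
end

/-! ### Tuples with prescribed products -/

/-- The box `[1, n]^k` of integer tuples, the range of each side of a solution of height `n`. -/
noncomputable def tupleBox (k n : ℕ) : Finset (Fin k → ℤ) := Fintype.piFinset fun _ ↦ Icc 1 (n : ℤ)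

theorem mem_tupleBox {k n : ℕ} {x : Fin k → ℤ} :
    x ∈ tupleBox k n ↔ ∀ i, 1 ≤ x i ∧ x i ≤ n := by
  simp [tupleBox, Fintype.mem_piFinset]

theorem card_tupleBox (k n : ℕ) : #(tupleBox k n) = n ^ k := by
  simp [tupleBox]

theorem card_filter_prod_eq_le_pow {ι α M : Type*} [Fintype ι] [DecidableEq ι] [CommMonoid M]
    [DecidableEq M] (s : Finset α) (g : α → M) (P : M) [DecidablePred (· ∣ P)] :
    #{y ∈ Fintype.piFinset fun _ : ι ↦ s | ∏ i, g (y i) = P} ≤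
      #{z ∈ s | g z ∣ P} ^ Fintype.card ι := by
  rw [← card_univ, ← prod_const, ← Fintype.card_piFinset]
  refine card_le_card fun y hy ↦ ?_
  simp only [mem_filter, Fintype.mem_piFinset] at hy ⊢
  exact fun i ↦ ⟨hy.1 i, hy.2 ▸ dvd_prod_of_mem (fun i ↦ g (y i)) (mem_univ i)⟩

theorem card_filter_natAbs_eval_eq_le {f : ℤ[X]} (hf : f.natDegree ≠ 0) (s : Finset ℤ) (e : ℕ) :
    #{z ∈ s | (f.eval z).natAbs = e} ≤ 2 * f.natDegree := by
  have hdeg : 0 < f.degree := natDegree_pos_iff_degree_pos.1 (Nat.pos_of_ne_zero hf)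
  have hne (c : ℤ) : f - C c ≠ 0 := fun h ↦ hf (by rw [sub_eq_zero.1 h, natDegree_C])
  have hcard (c : ℤ) : #(f - C c).roots.toFinset ≤ f.natDegree :=
    (Multiset.toFinset_card_le _).trans (card_roots_sub_C' hdeg)
  calc #{z ∈ s | (f.eval z).natAbs = e}
      ≤ #((f - C (e : ℤ)).roots.toFinset ∪ (f - C (-e : ℤ)).roots.toFinset) := by
        refine card_le_card fun z hz ↦ ?_
        simp only [mem_union, Multiset.mem_toFinset, mem_roots (hne _), IsRoot.def, eval_sub,
          eval_C, sub_eq_zero]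
        exact Int.natAbs_eq_iff.1 (mem_filter.1 hz).2
    _ ≤ f.natDegree + f.natDegree :=
        (card_union_le _ _).trans (add_le_add (hcard _) (hcard _))
    _ = 2 * f.natDegree := (two_mul _).symm

theorem card_filter_eval_dvd_le {f : ℤ[X]} (hf : f.natDegree ≠ 0) (s : Finset ℤ) {P : ℤ}
    (hP : P ≠ 0) : #{z ∈ s | f.eval z ∣ P} ≤ 2 * f.natDegree * #P.natAbs.divisors := by
  refine card_le_mul_card_image_of_maps_to (f := fun z ↦ (f.eval z).natAbs) ?_ _ fun e _ ↦
    card_filter_natAbs_eval_eq_le hf _ e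
  exact fun z hz ↦ Nat.mem_divisors.2
    ⟨Int.natAbs_dvd_natAbs.2 (mem_filter.1 hz).2, Int.natAbs_ne_zero.2 hP⟩

theorem exists_card_prod_eval_eq_le {f : ℤ[X]} (hf : f.natDegree ≠ 0) (k e : ℕ) {A ε : ℝ}
    (hA : 0 < A) (hε : 0 < ε) :
    ∃ C : ℝ, 0 < C ∧ ∀ n : ℕ, 1 ≤ n → ∀ P : ℤ, P ≠ 0 → |(P : ℝ)| ≤ A * (n : ℝ) ^ e →
      (#{y ∈ tupleBox k n | ∏ i, f.eval (y i) = P} : ℝ) ≤ C * (n : ℝ) ^ ε := by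
  set δ : ℝ := ε / (e * k + 1) with hδ
  obtain ⟨C, hC, hdivisors⟩ := exists_card_divisors_le_mul_rpow (δ := δ) (by positivity)
  refine ⟨(2 * f.natDegree * (C * A ^ δ)) ^ k, by positivity, fun n hn P hP hPle ↦ ?_⟩
  have hn1 : (1 : ℝ) ≤ n := mod_cast hn
  have hexp : (((n : ℝ) ^ e) ^ δ) ^ k ≤ (n : ℝ) ^ ε := by
    rw [← Real.rpow_natCast, ← Real.rpow_natCast, ← Real.rpow_mul (by positivity),
      ← Real.rpow_mul (by positivity)]
    refine Real.rpow_le_rpow_of_exponent_le hn1 ?_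
    rw [hδ, div_mul_eq_mul_div, mul_div_assoc', div_le_iff₀ (by positivity)]
    linarith
  have hdiv : (#P.natAbs.divisors : ℝ) ≤ C * (A ^ δ * ((n : ℝ) ^ e) ^ δ) := by
    refine (hdivisors _ (Int.natAbs_ne_zero.2 hP)).trans ?_
    rw [← Real.mul_rpow hA.le (by positivity), Nat.cast_natAbs, Int.cast_abs]
    gcongr
  calc (#{y ∈ tupleBox k n | ∏ i, f.eval (y i) = P} : ℝ)
      ≤ (2 * f.natDegree * #P.natAbs.divisors : ℝ) ^ k := by
        have h := card_filter_prod_eq_le_pow (ι := Fin k) (Icc 1 (n : ℤ)) f.eval P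
        rw [Fintype.card_fin] at h
        exact_mod_cast h.trans (Nat.pow_le_pow_left (card_filter_eval_dvd_le hf _ hP) k)
    _ ≤ (2 * f.natDegree * (C * (A ^ δ * ((n : ℝ) ^ e) ^ δ))) ^ k := by gcongr
    _ = (2 * f.natDegree * (C * A ^ δ)) ^ k * (((n : ℝ) ^ e) ^ δ) ^ k := by ring
    _ ≤ (2 * f.natDegree * (C * A ^ δ)) ^ k * (n : ℝ) ^ ε := by gcongr

theorem exists_card_prod_eval_eq_prod_eval_le {f : ℤ[X]} (hf : f.natDegree ≠ 0)
    (hroot : ∀ z, f.eval z ≠ 0) (k : ℕ) {ε : ℝ} (hε : 0 < ε) :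
    ∃ C : ℝ, 0 < C ∧ ∀ n : ℕ, 1 ≤ n → ∀ x ∈ tupleBox k n,
      (#{y ∈ tupleBox k n | ∏ i, f.eval (y i) = ∏ i, f.eval (x i)} : ℝ) ≤ C * (n : ℝ) ^ ε := by
  obtain ⟨B, hB, hupper⟩ := bound_of_isBigO_cofinite <|
    isBigO_intCast_eval (P := f) (Q := X ^ f.natDegree) (by simp [degree_le_natDegree])
  obtain ⟨C, hC, hcount⟩ := exists_card_prod_eval_eq_le hf k (f.natDegree * k)
    (pow_pos hB k) hε
  refine ⟨C, hC, fun n hn x hx ↦ hcount n hn _ (prod_ne_zero_iff.2 fun i _ ↦ hroot _) ?_⟩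
  rw [mem_tupleBox] at hx
  push_cast
  rw [abs_prod, pow_mul, ← mul_pow]
  calc ∏ i, |((f.eval (x i) : ℤ) : ℝ)| ≤ ∏ _i : Fin k, B * (n : ℝ) ^ f.natDegree := by
        refine prod_le_prod (fun _ _ ↦ abs_nonneg _) fun i _ ↦ ?_
        obtain ⟨hpos, hle⟩ := hx i
        have hne : (x i : ℝ) ≠ 0 := mod_cast (zero_lt_one.trans_le hpos).ne'
        have h := @hupper (x i) (by simp [hne])
        simp only [eval_pow, eval_X, Int.cast_pow, norm_pow, Real.norm_eq_abs] at h
        refine h.trans ?_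
        gcongr
        rw [abs_of_pos (mod_cast hpos)]
        exact_mod_cast hle
    _ = (B * (n : ℝ) ^ f.natDegree) ^ k := by simp

theorem card_Ioc_filter_dvd_le (N : ℕ) (M : ℤ) :
    (#{P ∈ Ioc 0 (N : ℤ) | M ∣ P} : ℝ) ≤ N / |(M : ℝ)| := by
  rcases eq_or_ne M 0 with rfl | hM
  · have hempty : {P ∈ Ioc 0 (N : ℤ) | 0 ∣ P} = ∅ :=
      filter_eq_empty_iff.2 fun P hP h ↦ (mem_Ioc.1 hP).1.ne' (zero_dvd_iff.1 h)
    rw [hempty, card_empty, Nat.cast_zero]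
    positivity
  have hcard : (#{P ∈ Ioc 0 (N : ℤ) | |M| ∣ P} : ℤ) = max ⌊(N : ℚ) / |M|⌋ 0 := by
    simpa using Int.Ioc_filter_dvd_card 0 (N : ℤ) (abs_pos.2 hM)
  rw [max_eq_left (by positivity)] at hcard
  simp only [abs_dvd] at hcard
  have hfloor : ((#{P ∈ Ioc 0 (N : ℤ) | M ∣ P} : ℤ) : ℚ) ≤ N / |M| :=
    hcard ▸ Int.floor_le _
  exact_mod_cast (Rat.cast_le (K := ℝ)).2 hfloor

theorem exists_card_dvd_prod_le (k : ℕ) {ε : ℝ} (hε : 0 < ε) :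
    ∃ C : ℝ, 0 < C ∧ ∀ n : ℕ, 1 ≤ n → ∀ M : ℤ,
      (#{u ∈ tupleBox k n | M ∣ ∏ i, u i} : ℝ) ≤ C * (n : ℝ) ^ ε * ((n : ℝ) ^ k / |(M : ℝ)|) := by
  obtain ⟨C, hC, hcount⟩ := exists_card_prod_eval_eq_le (f := X) (by simp) k k one_pos hε
  refine ⟨C, hC, fun n hn M ↦ ?_⟩
  have hmaps : ∀ u ∈ {u ∈ tupleBox k n | M ∣ ∏ i, u i},
      ∏ i, u i ∈ {P ∈ Ioc 0 ((n ^ k : ℕ) : ℤ) | M ∣ P} := by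
    intro u hu
    simp only [mem_filter, mem_tupleBox, mem_Ioc] at hu ⊢
    refine ⟨⟨prod_pos fun i _ ↦ (hu.1 i).1, ?_⟩, hu.2⟩
    calc ∏ i, u i ≤ ∏ _i : Fin k, (n : ℤ) :=
          prod_le_prod (fun i _ ↦ by linarith [(hu.1 i).1]) fun i _ ↦ (hu.1 i).2
      _ = (n ^ k : ℕ) := by simp
  rw [card_eq_sum_card_fiberwise hmaps]
  push_cast
  have hfiber : ∀ P ∈ {P ∈ Ioc 0 ((n ^ k : ℕ) : ℤ) | M ∣ P},
      (#{u ∈ {u ∈ tupleBox k n | M ∣ ∏ i, u i} | ∏ i, u i = P} : ℝ) ≤ C * (n : ℝ) ^ ε := by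
    intro P hP
    obtain ⟨hPpos, hPle⟩ := mem_Ioc.1 (mem_filter.1 hP).1
    refine le_trans ?_ (hcount n hn P hPpos.ne' ?_)
    · simp only [eval_X]
      gcongr
      exact filter_subset _ _
    · rw [one_mul, abs_of_pos (mod_cast hPpos)]
      exact_mod_cast hPle
  refine (sum_le_card_nsmul _ _ _ hfiber).trans ?_
  rw [nsmul_eq_mul, mul_comm]
  gcongr
  exact_mod_cast card_Ioc_filter_dvd_le (n ^ k) M

/-! ### Pairs with a dominating entry -/

theorem exists_sq_le_mul_abs_eval {f : ℤ[X]} (hf : 2 ≤ f.natDegree) :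
    ∃ B : ℝ, 0 < B ∧ ∀ z : ℤ, f.eval z ≠ 0 → (z : ℝ) ^ 2 ≤ B * |((f.eval z : ℤ) : ℝ)| := by
  have hdeg : (X ^ 2 : ℤ[X]).degree ≤ f.degree := by
    rw [degree_X_pow, degree_eq_natDegree (ne_zero_of_natDegree_gt hf)]
    exact_mod_cast hf
  obtain ⟨B, hB, hbound⟩ := bound_of_isBigO_cofinite (isBigO_intCast_eval hdeg)
  exact ⟨B, hB, fun z hz ↦ by simpa using hbound (x := z) (mod_cast hz)⟩

open Classical in
/-- Pairs `(x, y)` in the box with `∏ (X - x_i) ≡ ∏ (X - y_i)` modulo `f`, and such that some entry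
of `y` exceeds every entry of `x`. For `f` the minimal polynomial of `-θ` over `ℤ`, a solution
without a common entry is of this form, up to exchanging `x` and `y`. -/
noncomputable def dominatedPairs (f : ℤ[X]) (k n : ℕ) : Finset ((Fin k → ℤ) × (Fin k → ℤ)) :=
  {p ∈ tupleBox k n ×ˢ tupleBox k n |
    f ∣ rootPoly p.1 - rootPoly p.2 ∧ ∃ j, ∀ i, p.1 i < p.2 j}

theorem mem_dominatedPairs {f : ℤ[X]} {k n : ℕ} {p : (Fin k → ℤ) × (Fin k → ℤ)} :
    p ∈ dominatedPairs f k n ↔ (p.1 ∈ tupleBox k n ∧ p.2 ∈ tupleBox k n) ∧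
      f ∣ rootPoly p.1 - rootPoly p.2 ∧ ∃ j, ∀ i, p.1 i < p.2 j := by
  simp [dominatedPairs]

theorem card_filter_fst_eq_le {α β : Type*} [DecidableEq α] {s : Finset (α × β)}
    {t : Finset β} {a : α} (h : ∀ b, (a, b) ∈ s → b ∈ t) : #{p ∈ s | p.1 = a} ≤ #t := by
  refine card_le_card_of_injOn Prod.snd ?_ ?_
  · rintro ⟨a', b⟩ hp
    obtain ⟨hmem, rfl⟩ := mem_filter.1 hp
    exact h b hmem
  · rintro ⟨a₁, b₁⟩ h₁ ⟨a₂, b₂⟩ h₂ hb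
    exact Prod.ext ((mem_filter.1 h₁).2.trans (mem_filter.1 h₂).2.symm) hb

theorem exists_card_dominatedPairs_le_mul_card_image {f : ℤ[X]} (hf : f.natDegree ≠ 0)
    (hroot : ∀ z, f.eval z ≠ 0) (k : ℕ) {ε : ℝ} (hε : 0 < ε) :
    ∃ C : ℝ, 0 < C ∧ ∀ n : ℕ, 1 ≤ n →
      (#(dominatedPairs f k n) : ℝ) ≤
        C * (n : ℝ) ^ ε * #((dominatedPairs f k n).image Prod.fst) := by
  obtain ⟨C, hC, hcount⟩ := exists_card_prod_eval_eq_prod_eval_le hf hroot k hε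
  refine ⟨C, hC, fun n hn ↦ ?_⟩
  rw [card_eq_sum_card_image Prod.fst, mul_comm, ← nsmul_eq_mul]
  push_cast
  refine sum_le_card_nsmul _ _ _ fun x hx ↦ ?_
  obtain ⟨p, hp, rfl⟩ := mem_image.1 hx
  refine le_trans ?_ (hcount n hn p.1 (mem_dominatedPairs.1 hp).1.1)
  refine mod_cast card_filter_fst_eq_le fun y hy ↦ ?_
  obtain ⟨⟨-, hybox⟩, hdvd, -⟩ := mem_dominatedPairs.1 hy
  exact mem_filter.2 ⟨hybox, (prod_eval_eq_of_dvd_rootPoly_sub hdvd).symm⟩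

theorem card_image_fst_dominatedPairs_le_sum (f : ℤ[X]) (k n : ℕ) :
    #((dominatedPairs f k n).image Prod.fst) ≤
      ∑ Y ∈ Icc 1 n, #{u ∈ tupleBox k Y | f.eval (Y : ℤ) ∣ ∏ i, u i} := by
  classical
  have hsub : (dominatedPairs f k n).image Prod.fst ⊆ (Icc 1 n).biUnion fun Y ↦
      {u ∈ tupleBox k Y | f.eval (Y : ℤ) ∣ ∏ i, u i}.image fun u i ↦ (Y : ℤ) - u i := by
    intro x hx
    obtain ⟨p, hp, rfl⟩ := mem_image.1 hx
    obtain ⟨⟨hxbox, hybox⟩, hdvd, j, hj⟩ := mem_dominatedPairs.1 hp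
    obtain ⟨hpos, hle⟩ := mem_tupleBox.1 hybox j
    -- The dominating entry is a root of `rootPoly y`, so `f` there divides `rootPoly x` there.
    have heval : f.eval (p.2 j) ∣ ∏ i, (p.2 j - p.1 i) := by
      simpa [eval_rootPoly, prod_eq_zero (mem_univ j)] using eval_dvd (x := p.2 j) hdvd
    obtain ⟨Y, hY⟩ := Int.eq_ofNat_of_zero_le (zero_le_one.trans hpos)
    rw [hY] at hj heval hpos hle
    refine mem_biUnion.2 ⟨Y, mem_Icc.2 ⟨mod_cast hpos, mod_cast hle⟩, mem_image.2
      ⟨fun i ↦ Y - p.1 i, mem_filter.2 ⟨mem_tupleBox.2 fun i ↦ ?_, heval⟩,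
        funext fun i ↦ sub_sub_cancel _ _⟩⟩
    have hxpos := (mem_tupleBox.1 hxbox i).1
    exact ⟨by linarith [Int.add_one_le_of_lt (hj i)], by linarith⟩
  exact (card_le_card hsub).trans (card_biUnion_le.trans (sum_le_sum fun _ _ ↦ card_image_le))

theorem exists_card_image_fst_dominatedPairs_le {f : ℤ[X]} (hf : 2 ≤ f.natDegree)
    (hroot : ∀ z, f.eval z ≠ 0) (k : ℕ) {ε : ℝ} (hε : 0 < ε) :
    ∃ C : ℝ, ∀ n : ℕ, (#((dominatedPairs f (k + 2) n).image Prod.fst) : ℝ) ≤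
      C * (n : ℝ) ^ (k + 1) * (n : ℝ) ^ ε := by
  obtain ⟨B, hB, hlower⟩ := exists_sq_le_mul_abs_eval hf
  obtain ⟨C, hC, hcount⟩ := exists_card_dvd_prod_le (k + 2) hε
  refine ⟨C * B, fun n ↦ ?_⟩
  have hterm : ∀ Y ∈ Icc 1 n, (#{u ∈ tupleBox (k + 2) Y | f.eval (Y : ℤ) ∣ ∏ i, u i} : ℝ) ≤
      C * (n : ℝ) ^ ε * ((n : ℝ) ^ k * B) := by
    intro Y hY
    obtain ⟨hY1, hYn⟩ := mem_Icc.1 hY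
    -- Irrationality enters here: as `deg f ≥ 2`, the condition modulo `f(Y)` saves a factor `Y²`.
    have hquot : (Y : ℝ) ^ 2 / |((f.eval (Y : ℤ) : ℤ) : ℝ)| ≤ B :=
      div_le_of_le_mul₀ (abs_nonneg _) hB.le (by simpa using hlower Y (hroot Y))
    calc (#{u ∈ tupleBox (k + 2) Y | f.eval (Y : ℤ) ∣ ∏ i, u i} : ℝ)
        ≤ C * (Y : ℝ) ^ ε * ((Y : ℝ) ^ (k + 2) / |((f.eval (Y : ℤ) : ℤ) : ℝ)|) :=
          hcount Y hY1 _
      _ = C * (Y : ℝ) ^ ε * ((Y : ℝ) ^ k * ((Y : ℝ) ^ 2 / |((f.eval (Y : ℤ) : ℤ) : ℝ)|)) := by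
          rw [pow_add, mul_div_assoc]
      _ ≤ C * (n : ℝ) ^ ε * ((n : ℝ) ^ k * B) := by gcongr
  calc (#((dominatedPairs f (k + 2) n).image Prod.fst) : ℝ)
      ≤ ∑ Y ∈ Icc 1 n, (#{u ∈ tupleBox (k + 2) Y | f.eval (Y : ℤ) ∣ ∏ i, u i} : ℝ) :=
        mod_cast card_image_fst_dominatedPairs_le_sum f (k + 2) n
    _ ≤ #(Icc 1 n) • (C * (n : ℝ) ^ ε * ((n : ℝ) ^ k * B)) := sum_le_card_nsmul _ _ _ hterm
    _ = C * B * (n : ℝ) ^ (k + 1) * (n : ℝ) ^ ε := by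
        rw [Nat.card_Icc, Nat.add_sub_cancel, nsmul_eq_mul]
        ring

theorem isBigO_card_dominatedPairs {f : ℤ[X]} (hf : 2 ≤ f.natDegree)
    (hroot : ∀ z, f.eval z ≠ 0) (k : ℕ) {ε : ℝ} (hε : 0 < ε) :
    (fun n : ℕ ↦ (#(dominatedPairs f (k + 2) n) : ℝ)) =O[atTop]
      fun n ↦ (n : ℝ) ^ (k + 1) * (n : ℝ) ^ ε := by
  obtain ⟨C₁, hC₁, hfiber⟩ :=
    exists_card_dominatedPairs_le_mul_card_image (by lia) hroot (k + 2) (half_pos hε)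
  obtain ⟨C₂, himage⟩ := exists_card_image_fst_dominatedPairs_le hf hroot k (half_pos hε)
  refine IsBigO.of_bound (C₁ * C₂) (eventually_atTop.2 ⟨1, fun n hn ↦ ?_⟩)
  rw [Real.norm_of_nonneg (by positivity), Real.norm_of_nonneg (by positivity)]
  calc (#(dominatedPairs f (k + 2) n) : ℝ)
      ≤ C₁ * (n : ℝ) ^ (ε / 2) * (C₂ * (n : ℝ) ^ (k + 1) * (n : ℝ) ^ (ε / 2)) :=
        (hfiber n hn).trans (by gcongr; exact himage n)
    _ = C₁ * C₂ * ((n : ℝ) ^ (k + 1) * ((n : ℝ) ^ (ε / 2) * (n : ℝ) ^ (ε / 2))) := by ring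
    _ = C₁ * C₂ * ((n : ℝ) ^ (k + 1) * (n : ℝ) ^ ε) := by
        rw [← Real.rpow_add (mod_cast hn), add_halves]

/-! ### Solutions -/

section
variable {R : Type*} [CommRing R]

open Classical in
/-- The solutions of height `n` of `∏ (x_i + θ) = ∏ (y_i + θ)`. -/
noncomputable def solutionPairs (θ : R) (k n : ℕ) : Finset ((Fin k → ℤ) × (Fin k → ℤ)) :=
  {p ∈ tupleBox k n ×ˢ tupleBox k n | ∏ i, ((p.1 i : R) + θ) = ∏ i, ((p.2 i : R) + θ)}

/-- The nontrivial solutions of height `n`, those in which `y` is not a permutation of `x`; this is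
encoded as an inequality of polynomials, see `rootPoly_eq_iff`. -/
noncomputable def nontrivialPairs (θ : R) (k n : ℕ) : Finset ((Fin k → ℤ) × (Fin k → ℤ)) :=
  {p ∈ solutionPairs θ k n | rootPoly p.1 ≠ rootPoly p.2}

variable {θ : R} {k n : ℕ} {p : (Fin k → ℤ) × (Fin k → ℤ)}

theorem mem_solutionPairs : p ∈ solutionPairs θ k n ↔
    (p.1 ∈ tupleBox k n ∧ p.2 ∈ tupleBox k n) ∧
      ∏ i, ((p.1 i : R) + θ) = ∏ i, ((p.2 i : R) + θ) := by
  simp [solutionPairs]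

theorem mem_nontrivialPairs : p ∈ nontrivialPairs θ k n ↔
    ((p.1 ∈ tupleBox k n ∧ p.2 ∈ tupleBox k n) ∧
      ∏ i, ((p.1 i : R) + θ) = ∏ i, ((p.2 i : R) + θ)) ∧ rootPoly p.1 ≠ rootPoly p.2 := by
  simp [nontrivialPairs, mem_solutionPairs]

theorem aeval_rootPoly_sub_eq_zero (hp : p ∈ solutionPairs θ k n) :
    aeval (-θ) (rootPoly p.1 - rootPoly p.2) = 0 := by
  rw [map_sub, sub_eq_zero, aeval_neg_rootPoly, aeval_neg_rootPoly]
  exact congrArg _ (mem_solutionPairs.1 hp).2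

theorem insertNth_mem_tupleBox {k n : ℕ} {i : Fin (k + 1)} {c : ℤ} {x : Fin k → ℤ} :
    (i.insertNth c x : Fin (k + 1) → ℤ) ∈ tupleBox (k + 1) n ↔
      c ∈ Icc 1 (n : ℤ) ∧ x ∈ tupleBox k n := by
  simp [mem_tupleBox, Fin.forall_iff_succAbove i]

theorem rootPoly_insertNth (i : Fin (k + 1)) (c : R) (x : Fin k → R) :
    rootPoly (i.insertNth c x : Fin (k + 1) → R) = (X - C c) * rootPoly x := by
  simp [rootPoly, Fin.prod_univ_succAbove _ i]

theorem insertNth_mem_nontrivialPairs [IsDomain R] (hθ : ∀ a : ℤ, (a : R) + θ ≠ 0)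
    {i j : Fin (k + 1)} {c : ℤ} {x y : Fin k → ℤ} :
    (i.insertNth c x, j.insertNth c y) ∈ nontrivialPairs θ (k + 1) n ↔
      c ∈ Icc 1 (n : ℤ) ∧ (x, y) ∈ nontrivialPairs θ k n := by
  have hprod (l : Fin (k + 1)) (w : Fin k → ℤ) :
      ∏ m, (((l.insertNth c w : Fin (k + 1) → ℤ) m : R) + θ) = (c + θ) * ∏ m, ((w m : R) + θ) := by
    simp [Fin.prod_univ_succAbove _ l]
  simp only [mem_nontrivialPairs, insertNth_mem_tupleBox, rootPoly_insertNth, hprod,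
    mul_right_inj' (hθ c), mul_right_inj' (X_sub_C_ne_zero c), ne_eq]
  tauto

theorem card_filter_nontrivialPairs_eq_le [IsDomain R] (hθ : ∀ a : ℤ, (a : R) + θ ≠ 0)
    (k n : ℕ) (i j : Fin (k + 1)) :
    #{p ∈ nontrivialPairs θ (k + 1) n | p.1 i = p.2 j} ≤ n * #(nontrivialPairs θ k n) := by
  have hsub : {p ∈ nontrivialPairs θ (k + 1) n | p.1 i = p.2 j} ⊆
      (Icc 1 (n : ℤ) ×ˢ nontrivialPairs θ k n).image
        fun q ↦ (i.insertNth q.1 q.2.1, j.insertNth q.1 q.2.2) := by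
    rintro ⟨x, y⟩ hp
    obtain ⟨hmem, hxy⟩ := mem_filter.1 hp
    have hx : i.insertNth (x i) (i.removeNth x) = x := Fin.insertNth_self_removeNth i x
    have hy : j.insertNth (x i) (j.removeNth y) = y := by
      rw [show x i = y j from hxy, Fin.insertNth_self_removeNth]
    refine mem_image.2 ⟨(x i, i.removeNth x, j.removeNth y), mem_product.2 ?_, Prod.ext hx hy⟩
    rwa [← insertNth_mem_nontrivialPairs hθ (i := i) (j := j), hx, hy]
  calc #{p ∈ nontrivialPairs θ (k + 1) n | p.1 i = p.2 j}
      ≤ #(Icc 1 (n : ℤ) ×ˢ nontrivialPairs θ k n) := (card_le_card hsub).trans card_image_le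
    _ = n * #(nontrivialPairs θ k n) := by simp [card_product]

theorem mem_dominatedPairs_or_swap_mem {f : ℤ[X]} (hf : ∀ F : ℤ[X], aeval (-θ) F = 0 → f ∣ F)
    {p : (Fin (k + 1) → ℤ) × (Fin (k + 1) → ℤ)} (hp : p ∈ solutionPairs θ (k + 1) n)
    (hne : ∀ i j, p.1 i ≠ p.2 j) :
    p ∈ dominatedPairs f (k + 1) n ∨ p.swap ∈ dominatedPairs f (k + 1) n := by
  obtain ⟨hx, hy⟩ := (mem_solutionPairs.1 hp).1
  have hdvd := hf _ (aeval_rootPoly_sub_eq_zero hp)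
  obtain ⟨i, hi⟩ := Finite.exists_max p.1
  obtain ⟨j, hj⟩ := Finite.exists_max p.2
  simp only [mem_dominatedPairs]
  rcases (hne i j).lt_or_gt with hlt | hgt
  · exact .inl ⟨⟨hx, hy⟩, hdvd, j, fun l ↦ (hi l).trans_lt hlt⟩
  · exact .inr ⟨⟨hy, hx⟩, dvd_sub_comm.1 hdvd, i, fun l ↦ (hj l).trans_lt hgt⟩

theorem card_nontrivialPairs_succ_le [IsDomain R] (hθ : ∀ a : ℤ, (a : R) + θ ≠ 0) {f : ℤ[X]}
    (hf : ∀ F : ℤ[X], aeval (-θ) F = 0 → f ∣ F) (k n : ℕ) :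
    #(nontrivialPairs θ (k + 1) n) ≤ (k + 1) ^ 2 * (n * #(nontrivialPairs θ k n)) +
      2 * #(dominatedPairs f (k + 1) n) := by
  set D := dominatedPairs f (k + 1) n
  set E : Fin (k + 1) × Fin (k + 1) → Finset ((Fin (k + 1) → ℤ) × (Fin (k + 1) → ℤ)) :=
    fun l ↦ {p ∈ nontrivialPairs θ (k + 1) n | p.1 l.1 = p.2 l.2}
  have hsub : nontrivialPairs θ (k + 1) n ⊆ univ.biUnion E ∪ (D ∪ D.image Prod.swap) := by
    intro p hp
    by_cases hmeet : ∃ i j, p.1 i = p.2 j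
    · obtain ⟨i, j, hij⟩ := hmeet
      exact mem_union_left _ (mem_biUnion.2 ⟨(i, j), mem_univ _, mem_filter.2 ⟨hp, hij⟩⟩)
    · push Not at hmeet
      refine mem_union_right _ (mem_union.2 ?_)
      exact (mem_dominatedPairs_or_swap_mem hf (mem_filter.1 hp).1 hmeet).imp id fun h ↦
        mem_image.2 ⟨_, h, p.swap_swap⟩
  have hE : #(univ.biUnion E) ≤ (k + 1) ^ 2 * (n * #(nontrivialPairs θ k n)) := by
    refine (card_biUnion_le_card_mul _ _ _ fun l _ ↦
      card_filter_nontrivialPairs_eq_le hθ k n l.1 l.2).trans_eq ?_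
    simp [sq]
  have hD : #(D ∪ D.image Prod.swap) ≤ 2 * #D :=
    (card_union_le _ _).trans (by linarith [card_image_le (s := D) (f := Prod.swap)])
  exact (card_le_card hsub).trans ((card_union_le _ _).trans (add_le_add hE hD))

theorem nontrivialPairs_one [CharZero R] (θ : R) (n : ℕ) : nontrivialPairs θ 1 n = ∅ := by
  refine eq_empty_of_forall_notMem fun p hp ↦ ?_
  obtain ⟨⟨-, heq⟩, hne⟩ := mem_nontrivialPairs.1 hp
  simp only [univ_unique, prod_singleton, add_left_inj, Int.cast_inj] at heq
  exact hne (by simp only [rootPoly, univ_unique, prod_singleton, heq])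

theorem nontrivialPairs_eq_empty_of_transcendental (hθ : Transcendental ℤ (-θ)) (k n : ℕ) :
    nontrivialPairs θ k n = ∅ :=
  eq_empty_of_forall_notMem fun _ hp ↦ (mem_filter.1 hp).2 <| sub_eq_zero.1 <|
    transcendental_iff.1 hθ _ (aeval_rootPoly_sub_eq_zero (mem_filter.1 hp).1)

theorem isBigO_card_nontrivialPairs_of_dvd [IsDomain R] [CharZero R]
    (hθ : ∀ a : ℤ, (a : R) + θ ≠ 0) {f : ℤ[X]} (hdeg : 2 ≤ f.natDegree)
    (hroot : ∀ z, f.eval z ≠ 0) (hf : ∀ F : ℤ[X], aeval (-θ) F = 0 → f ∣ F) (k : ℕ) {ε : ℝ}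
    (hε : 0 < ε) :
    (fun n : ℕ ↦ (#(nontrivialPairs θ (k + 1) n) : ℝ)) =O[atTop]
      fun n ↦ (n : ℝ) ^ k * (n : ℝ) ^ ε := by
  induction k with
  | zero => simpa [nontrivialPairs_one] using isBigO_zero _ _
  | succ k ih =>
    have hmeet : (fun n : ℕ ↦ (n : ℝ) * #(nontrivialPairs θ (k + 1) n)) =O[atTop]
        fun n ↦ (n : ℝ) ^ (k + 1) * (n : ℝ) ^ ε := by
      simpa only [pow_succ', mul_assoc] using (isBigO_refl (fun n : ℕ ↦ (n : ℝ)) atTop).mul ih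
    refine (isBigO_of_le _ fun n ↦ ?_).trans <| (hmeet.const_mul_left ((k + 2) ^ 2)).add <|
      (isBigO_card_dominatedPairs hdeg hroot k hε).const_mul_left 2
    rw [Real.norm_of_nonneg (by positivity), Real.norm_of_nonneg (by positivity)]
    exact_mod_cast card_nontrivialPairs_succ_le hθ hf (k + 1) n

end

theorem isBigO_card_nontrivialPairs {K : Type*} [Field K] [CharZero K] {θ : K}
    (hθ : ∀ q : ℚ, θ ≠ q) (k : ℕ) {ε : ℝ} (hε : 0 < ε) :
    (fun n : ℕ ↦ (#(nontrivialPairs θ (k + 1) n) : ℝ)) =O[atTop]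
      fun n ↦ (n : ℝ) ^ k * (n : ℝ) ^ ε := by
  by_cases halg : IsAlgebraic ℤ (-θ)
  · have hneg (q : ℚ) : -θ ≠ q := fun h ↦ hθ (-q) (by rw [Rat.cast_neg, ← h, neg_neg])
    have hint (a : ℤ) : (a : K) + θ ≠ 0 := fun h ↦
      hneg a (by rw [Rat.cast_intCast, eq_neg_of_add_eq_zero_left h])
    obtain ⟨f, hirr, hfroot, hdvd⟩ := exists_irreducible_forall_dvd_of_isAlgebraic halg
    have hdeg := two_le_natDegree_of_aeval_eq_zero hneg hirr.ne_zero hfroot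
    exact isBigO_card_nontrivialPairs_of_dvd hint hdeg
      (fun _ ↦ hirr.not_isRoot_of_natDegree_ne_one (by lia)) hdvd k hε
  · simpa [nontrivialPairs_eq_empty_of_transcendental halg] using isBigO_zero _ _

section
variable {R : Type*} [CommRing R]

theorem card_solutionPairs_le (θ : R) (k n : ℕ) :
    #(solutionPairs θ k n) ≤ k.factorial * n ^ k + #(nontrivialPairs θ k n) := by
  have hsub : {p ∈ solutionPairs θ k n | rootPoly p.1 = rootPoly p.2} ⊆
      ((univ : Finset (Equiv.Perm (Fin k))) ×ˢ tupleBox k n).image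
        fun q ↦ (q.2 ∘ q.1, q.2) := by
    intro p hp
    obtain ⟨hsol, heq⟩ := mem_filter.1 hp
    obtain ⟨σ, hσ⟩ := rootPoly_eq_iff.1 heq
    exact mem_image.2 ⟨(σ, p.2), mem_product.2 ⟨mem_univ _, (mem_solutionPairs.1 hsol).1.2⟩,
      Prod.ext hσ rfl⟩
  rw [← card_filter_add_card_filter_not (fun p ↦ rootPoly p.1 = rootPoly p.2)]
  refine Nat.add_le_add_right ((card_le_card hsub).trans (card_image_le.trans_eq ?_)) _
  rw [card_product, card_univ, Fintype.card_perm, Fintype.card_fin, card_tupleBox]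

theorem factorial_mul_descFactorial_le_card_solutionPairs (θ : R) (k n : ℕ) :
    k.factorial * n.descFactorial k ≤ #(solutionPairs θ k n) := by
  have hcard : k.factorial * n.descFactorial k =
      #(univ : Finset (Equiv.Perm (Fin k) × (Fin k ↪ Fin n))) := by
    rw [card_univ, Fintype.card_prod, Fintype.card_perm, Fintype.card_embedding_eq]
    simp
  rw [hcard]
  let tuple (e : Fin k ↪ Fin n) (i : Fin k) : ℤ := (e i : ℕ) + 1
  have htuple_mem (e : Fin k ↪ Fin n) : tuple e ∈ tupleBox k n :=
    mem_tupleBox.2 fun i ↦ by grind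
  have htuple_injective (e : Fin k ↪ Fin n) : Function.Injective (tuple e) := fun i j hij ↦
    e.injective (Fin.ext (by simpa [tuple] using hij))
  refine card_le_card_of_injOn (fun a ↦ (tuple a.2 ∘ a.1, tuple a.2)) (fun a _ ↦ ?_) ?_
  · refine mem_solutionPairs.2 ⟨⟨mem_tupleBox.2 fun i ↦ ?_, htuple_mem a.2⟩, ?_⟩
    · exact mem_tupleBox.1 (htuple_mem a.2) (a.1 i)
    · exact Equiv.prod_comp a.1 fun i ↦ (tuple a.2 i : R) + θ
  · rintro ⟨σ, e⟩ - ⟨τ, g⟩ - h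
    obtain ⟨hperm, htuple⟩ := Prod.mk.inj h
    obtain rfl : e = g := by
      ext i
      simpa [tuple] using congrFun htuple i
    have hστ : σ = τ := Equiv.ext fun i ↦ htuple_injective e (congrFun hperm i)
    rw [hστ]

end

theorem pow_succ_le_descFactorial_add (n k : ℕ) :
    n ^ (k + 1) ≤ n.descFactorial (k + 1) + (k + 1) ^ 2 * n ^ k := by
  induction k with
  | zero => simp
  | succ k ih =>
    set d := n.descFactorial (k + 1)
    have hd : d ≤ n ^ (k + 1) := Nat.descFactorial_le_pow n (k + 1)
    have hn : n ≤ n - (k + 1) + (k + 1) := by lia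
    calc n ^ (k + 2) = n ^ (k + 1) * n := pow_succ _ _
      _ ≤ (d + (k + 1) ^ 2 * n ^ k) * n := by gcongr
      _ = d * n + (k + 1) ^ 2 * n ^ (k + 1) := by ring
      _ ≤ d * (n - (k + 1) + (k + 1)) + (k + 1) ^ 2 * n ^ (k + 1) := by gcongr
      _ = n.descFactorial (k + 2) + ((k + 1) * d + (k + 1) ^ 2 * n ^ (k + 1)) := by
        rw [Nat.descFactorial_succ]; ring
      _ ≤ n.descFactorial (k + 2) + ((k + 1) * n ^ (k + 1) + (k + 1) ^ 2 * n ^ (k + 1)) := by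
        gcongr
      _ ≤ n.descFactorial (k + 2) + (k + 1 + 1) ^ 2 * n ^ (k + 1) := by
        rw [← add_mul]; gcongr; nlinarith

theorem abs_card_solutionPairs_sub_le {R : Type*} [CommRing R] (θ : R) (k n : ℕ) :
    |(#(solutionPairs θ (k + 1) n) : ℝ) - (k + 1).factorial * (n : ℝ) ^ (k + 1)| ≤
      #(nontrivialPairs θ (k + 1) n) + (k + 1).factorial * (k + 1) ^ 2 * (n : ℝ) ^ k := by
  have hupper : (#(solutionPairs θ (k + 1) n) : ℝ) ≤
      (k + 1).factorial * (n : ℝ) ^ (k + 1) + #(nontrivialPairs θ (k + 1) n) :=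
    mod_cast card_solutionPairs_le θ (k + 1) n
  have hlower : (k + 1).factorial * (n : ℝ) ^ (k + 1) ≤
      #(solutionPairs θ (k + 1) n) + (k + 1).factorial * (k + 1) ^ 2 * (n : ℝ) ^ k := by
    have h := Nat.mul_le_mul_left (k + 1).factorial (pow_succ_le_descFactorial_add n k)
    rw [mul_add, ← mul_assoc (k + 1).factorial ((k + 1) ^ 2)] at h
    exact_mod_cast h.trans <| Nat.add_le_add_right
      (factorial_mul_descFactorial_le_card_solutionPairs θ (k + 1) n) _
  have : (0 : ℝ) ≤ (k + 1).factorial * (k + 1) ^ 2 * (n : ℝ) ^ k := by positivity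
  have : (0 : ℝ) ≤ #(nontrivialPairs θ (k + 1) n) := by positivity
  rw [abs_sub_le_iff]
  constructor <;> linarith

theorem isBigO_card_solutionPairs_sub {K : Type*} [Field K] [CharZero K] {θ : K}
    (hθ : ∀ q : ℚ, θ ≠ q) (k : ℕ) {ε : ℝ} (hε : 0 < ε) :
    (fun n : ℕ ↦ (#(solutionPairs θ (k + 1) n) : ℝ) - (k + 1).factorial * (n : ℝ) ^ (k + 1))
      =O[atTop] fun n ↦ (n : ℝ) ^ k * (n : ℝ) ^ ε := by
  have hpow : (fun n : ℕ ↦ (n : ℝ) ^ k) =O[atTop] fun n ↦ (n : ℝ) ^ k * (n : ℝ) ^ ε := by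
    refine IsBigO.of_bound' (eventually_atTop.2 ⟨1, fun n hn ↦ ?_⟩)
    rw [norm_mul]
    refine le_mul_of_one_le_right (norm_nonneg _) ?_
    rw [Real.norm_of_nonneg (by positivity)]
    exact Real.one_le_rpow (mod_cast hn) hε.le
  refine (isBigO_of_le _ fun n ↦ ?_).trans <| (isBigO_card_nontrivialPairs hθ k hε).add <|
    hpow.const_mul_left ((k + 1).factorial * (k + 1) ^ 2)
  exact (abs_card_solutionPairs_sub_le θ k n).trans (Real.le_norm_self _)

theorem setOf_eq_coe_solutionPairs {R : Type*} [CommRing R] (θ : R) (k : ℕ) {X : ℝ} (hX : 0 ≤ X) :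
    {p : (Fin k → ℤ) × (Fin k → ℤ) |
      (∀ i, 1 ≤ p.1 i ∧ (p.1 i : ℝ) ≤ X) ∧ (∀ i, 1 ≤ p.2 i ∧ (p.2 i : ℝ) ≤ X) ∧
        ∏ i, ((p.1 i : R) + θ) = ∏ i, ((p.2 i : R) + θ)} = solutionPairs θ k ⌊X⌋₊ := by
  ext p
  simp only [mem_coe, mem_solutionPairs, mem_tupleBox, Int.natCast_floor_eq_floor hX,
    Int.le_floor, Set.mem_ofPred_eq, and_assoc]

theorem asymptotic_formula_irrational_general {K : Type*} [Field K] [CharZero K] (k : ℕ) {θ : K}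
    (hθ : ∀ q : ℚ, θ ≠ q) {ε : ℝ} (hε : 0 < ε) :
    ∃ C : ℝ, 0 < C ∧ ∀ X : ℝ, 1 ≤ X →
      |({p : (Fin k → ℤ) × (Fin k → ℤ) |
          (∀ i, 1 ≤ p.1 i ∧ (p.1 i : ℝ) ≤ X) ∧ (∀ i, 1 ≤ p.2 i ∧ (p.2 i : ℝ) ≤ X) ∧
          ∏ i, ((p.1 i : K) + θ) = ∏ i, ((p.2 i : K) + θ)}.ncard : ℝ)
          - (Nat.factorial k : ℝ) * (⌊X⌋ : ℝ) ^ k|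
        ≤ C * X ^ ((k : ℝ) - 1 + ε) := by
  rcases k with _ | k
  · refine ⟨1, one_pos, fun X hX ↦ ?_⟩
    simpa using Real.rpow_nonneg (zero_le_one.trans hX) (-1 + ε)
  obtain ⟨C, hC, hbound⟩ := bound_of_isBigO_nat_atTop (isBigO_card_solutionPairs_sub hθ k hε)
  refine ⟨C, hC, fun X hX ↦ ?_⟩
  have hn : (0 : ℝ) < ⌊X⌋₊ := mod_cast Nat.floor_pos.2 hX
  have h := hbound (x := ⌊X⌋₊) (by positivity)
  rw [Real.norm_eq_abs, Real.norm_of_nonneg (by positivity), ← Real.rpow_natCast _ k,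
    ← Real.rpow_add hn] at h
  rw [setOf_eq_coe_solutionPairs θ _ (by linarith), Set.ncard_coe_finset,
    ← Int.natCast_floor_eq_floor (by linarith), Int.cast_natCast, Nat.cast_succ,
    add_sub_cancel_right]
  refine h.trans ?_
  gcongr
  exact Nat.floor_le (by linarith)

end

/-- If `θ ∈ ℂ` is not rational, then for every `ε > 0` there is `C > 0` such that for all
`X ≥ 2` the number `N_k(X)` of solutions of `(x₁+θ)⋯(x_k+θ) = (y₁+θ)⋯(y_k+θ)` with
`1 ≤ x_i, y_i ≤ X` satisfies `|N_k(X) − k!·⌊X⌋^k| ≤ C·X^(k−1+ε)`. -/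
theorem asymptotic_formula_irrational (k : ℕ) (hk : 0 < k) (θ : ℂ)
    (hθ : ∀ q : ℚ, θ ≠ (q : ℂ)) (ε : ℝ) (hε : 0 < ε) :
    ∃ C : ℝ, 0 < C ∧ ∀ X : ℝ, 2 ≤ X →
      |({p : (Fin k → ℤ) × (Fin k → ℤ) |
          (∀ i, 1 ≤ p.1 i ∧ (p.1 i : ℝ) ≤ X) ∧ (∀ i, 1 ≤ p.2 i ∧ (p.2 i : ℝ) ≤ X) ∧
          ∏ i, ((p.1 i : ℂ) + θ) = ∏ i, ((p.2 i : ℂ) + θ)}.ncard : ℝ)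
          - (Nat.factorial k : ℝ) * (⌊X⌋ : ℝ) ^ k|
        ≤ C * X ^ ((k : ℝ) - 1 + ε) := by
  obtain ⟨C, hC, hbound⟩ := asymptotic_formula_irrational_general k hθ hε
  exact ⟨C, hC, fun X hX ↦ hbound X (one_le_two.trans hX)⟩
end
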